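/- (Uniform variance upper bound.) Let ψ be the (σ,λ)-GFF on V_N. There exists a constant C_0 = C_0(σ) > 0 such that for all scales 0 ≤ α < α' ≤ 1 and all N large enough (independent of α and α'), max_{v∈V_N} E[ψ_v(α,α')²] ≤ 𝒥_{σ²}(α,α') log N + C_0. -/

import Mathlib

open Filter
open scoped Classical

noncomputable section GFFCommon

/-- Vertices of `ℤ²`. -/
abbrev Vtx : Type := ℤ × ℤ

/-- Sample space: a real-valued field indexed by the vertices of `ℤ²`. -/
abbrev FieldSp : Type := Vtx → ℝ

/-- The box `V_N = {0,1,…,N}²`. -/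
def VN (N : ℕ) : Finset Vtx := Finset.Icc (0, 0) ((N : ℤ), (N : ℤ))

/-- The boundary `∂B` of a finite box `B ⊆ ℤ²`:
vertices of `B` having a (Euclidean distance 1) neighbour outside `B`. -/
def bdry (B : Finset Vtx) : Finset Vtx :=
  B.filter fun v =>
    ¬((v.1 + 1, v.2) ∈ B ∧ (v.1 - 1, v.2) ∈ B ∧ (v.1, v.2 + 1) ∈ B ∧ (v.1, v.2 - 1) ∈ B)

/-- The interior `B° = B ∖ ∂B`. -/
def intr (B : Finset Vtx) : Finset Vtx := B \ bdry B

/-- The neighbourhood `[v]_λ` of `v` in `V_N`. -/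
def nbhd (N : ℕ) (lam : ℝ) (v : Vtx) : Finset Vtx :=
  if lam = 0 then VN N
  else if lam = 1 then {v}
  else (VN N).filter fun w =>
    |(w.1 : ℝ) - (v.1 : ℝ)| ≤ (N : ℝ) ^ ((1 : ℝ) - lam) / 2 ∧
    |(w.2 : ℝ) - (v.2 : ℝ)| ≤ (N : ℝ) ^ ((1 : ℝ) - lam) / 2

/-- The σ-algebra `F_{∂[v]_λ ∪ [v]_λ^c}`, generated by the field variables on the
boundary of `[v]_λ` and those outside of it. -/
def scaleAlg (N : ℕ) (lam : ℝ) (v : Vtx) : MeasurableSpace FieldSp :=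
  ⨆ w ∈ {w : Vtx | w ∈ VN N ∧ w ∉ intr (nbhd N lam v)},
    MeasurableSpace.comap (fun ω : FieldSp => ω w) inferInstance

/-- `G` is the Green function of simple random walk killed on `∂B`, normalized by `π/2`:
it vanishes unless both arguments are in `B°`, and in `B°` it satisfies the
first-step (discrete Poisson equation) characterization
`G(x,y) = (1/4)·Σ_{x'∼x} G(x',y) + (π/2)·1_{x=y}`. -/
def IsGreenFn (B : Finset Vtx) (G : Vtx → Vtx → ℝ) : Prop :=
  (∀ x y : Vtx, x ∉ intr B ∨ y ∉ intr B → G x y = 0) ∧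
  ∀ y ∈ intr B, ∀ x ∈ intr B,
    G x y = (G (x.1 + 1, x.2) y + G (x.1 - 1, x.2) y
        + G (x.1, x.2 + 1) y + G (x.1, x.2 - 1) y) / 4
      + (Real.pi / 2) * (if x = y then 1 else 0)

/-- `P` is the law (on the canonical space `FieldSp`) of the Gaussian free field on `V_N`:
a centered Gaussian field with covariance the Green function `G_{V_N}`. -/
def IsGFF (N : ℕ) (P : MeasureTheory.Measure FieldSp) : Prop :=
  MeasureTheory.IsProbabilityMeasure P ∧
  ∃ G : Vtx → Vtx → ℝ, IsGreenFn (VN N) G ∧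
    ∀ c : Vtx → ℝ,
      P.map (fun ω => ∑ v ∈ VN N, c v * ω v) =
        ProbabilityTheory.gaussianReal 0 (Real.toNNReal (∑ v ∈ VN N, ∑ w ∈ VN N, c v * c w * G v w))

open MeasureTheory in
/-- `φ_v(λ) = E[φ_v | F_{∂[v]_λ ∪ [v]_λ^c}]`. -/
def phiScale (N : ℕ) (P : MeasureTheory.Measure FieldSp) (v : Vtx) (lam : ℝ) : FieldSp → ℝ :=
  P[fun ω : FieldSp => ω v | scaleAlg N lam v]

/-- Admissible parameters `(σ,λ)`: `σ_1,…,σ_M > 0` and `0 = λ_0 < λ_1 < … < λ_M = 1`. -/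
def ScaleParams (M : ℕ) (sigv lamv : ℕ → ℝ) : Prop :=
  1 ≤ M ∧ (∀ i ∈ Finset.Icc 1 M, 0 < sigv i) ∧
  lamv 0 = 0 ∧ lamv M = 1 ∧ ∀ i, i < M → lamv i < lamv (i + 1)

/-- The `(σ,λ)`-GFF: `ψ_v = Σ_{i=1}^M σ_i (φ_v(λ_i) − φ_v(λ_{i−1}))`. -/
def psiFld (N M : ℕ) (sigv lamv : ℕ → ℝ) (P : MeasureTheory.Measure FieldSp) (v : Vtx) : FieldSp → ℝ :=
  fun ω => ∑ i ∈ Finset.Icc 1 M, sigv i * (phiScale N P v (lamv i) ω - phiScale N P v (lamv (i - 1)) ω)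

open MeasureTheory in
/-- `ψ_v(λ) = E[ψ_v | F_{∂[v]_λ ∪ [v]_λ^c}]`. -/
def psiScale (N M : ℕ) (sigv lamv : ℕ → ℝ) (P : MeasureTheory.Measure FieldSp) (v : Vtx) (lam : ℝ) :
    FieldSp → ℝ :=
  P[psiFld N M sigv lamv P v | scaleAlg N lam v]

/-- The increment `ψ_v(λ,λ') = ψ_v(λ') − ψ_v(λ)`. -/
def psiInc (N M : ℕ) (sigv lamv : ℕ → ℝ) (P : MeasureTheory.Measure FieldSp) (v : Vtx) (lam lam' : ℝ) :
    FieldSp → ℝ :=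
  fun ω => psiScale N M sigv lamv P v lam' ω - psiScale N M sigv lamv P v lam ω

/-- The step function `σ(s) = σ_1 1_{{0}}(s) + Σ_{i=1}^M σ_i 1_{(λ_{i−1},λ_i]}(s)`. -/
def stepFn (M : ℕ) (sigv lamv : ℕ → ℝ) (s : ℝ) : ℝ :=
  (if s = 0 then sigv 1 else 0) +
  ∑ i ∈ Finset.Icc 1 M, if lamv (i - 1) < s ∧ s ≤ lamv i then sigv i else 0

/-- `𝒥_f(s) = ∫_0^s f(r) dr`. -/
def Jint (f : ℝ → ℝ) (s : ℝ) : ℝ := ∫ r in (0:ℝ)..s, f r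

/-- `𝒥_f(s₁,s₂) = ∫_{s₁}^{s₂} f(r) dr`. -/
def Jint2 (f : ℝ → ℝ) (s₁ s₂ : ℝ) : ℝ := ∫ r in s₁..s₂, f r

/-- The speed function `𝒥_{σ²}`. -/
def Jsig2 (M : ℕ) (sigv lamv : ℕ → ℝ) (s : ℝ) : ℝ := Jint (fun r => (stepFn M sigv lamv r) ^ 2) s

/-- The normalized speed function `𝒥̄_{σ²} = 𝒥_{σ²}/𝒥_{σ²}(1)`. -/
def JsigBar (M : ℕ) (sigv lamv : ℕ → ℝ) (s : ℝ) : ℝ := Jsig2 M sigv lamv s / Jsig2 M sigv lamv 1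

/-- The concave hull on `[0,1]` of a function `f`, i.e. the pointwise infimum over all
concave functions dominating `f` on `[0,1]`. -/
def concaveHull (f : ℝ → ℝ) (s : ℝ) : ℝ :=
  sInf {y | ∃ g : ℝ → ℝ, ConcaveOn ℝ (Set.Icc (0:ℝ) 1) g ∧
    (∀ t ∈ Set.Icc (0:ℝ) 1, f t ≤ g t) ∧ y = g s}

/-- The effective parameters: jump scales `0 = λ⁰ < … < λ^m = 1`, values
`σ̄_1 > … > σ̄_m > 0`, and the left-continuous non-increasing step function `σ̄`
such that `∫_0^s σ̄²` is the concavification of `𝒥_{σ²}`. -/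
def EffParams (M : ℕ) (sigv lamv : ℕ → ℝ) (m : ℕ) (sigb lamb : ℕ → ℝ) (sigbar : ℝ → ℝ) : Prop :=
  1 ≤ m ∧ m ≤ M ∧ lamb 0 = 0 ∧ lamb m = 1 ∧ (∀ j, j < m → lamb j < lamb (j + 1)) ∧
  (∀ l, 1 ≤ l → l < m → sigb (l + 1) < sigb l) ∧ (∀ l ∈ Finset.Icc 1 m, 0 < sigb l) ∧
  sigbar 0 = sigb 1 ∧
  (∀ l ∈ Finset.Icc 1 m, ∀ s : ℝ, lamb (l - 1) < s → s ≤ lamb l → sigbar s = sigb l) ∧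
  (∀ s : ℝ, 0 < s → s ≤ 1 →
    concaveHull (Jsig2 M sigv lamv) s = ∫ r in (0:ℝ)..s, (sigbar r) ^ 2)

/-- `γ* = 𝒥_{σ²/σ̄}(1)`. -/
def gammaStar (M : ℕ) (sigv lamv : ℕ → ℝ) (sigbar : ℝ → ℝ) : ℝ :=
  ∫ s in (0:ℝ)..1, (stepFn M sigv lamv s) ^ 2 / sigbar s

/-- The critical levels `γ^l = ∫_0^1 σ²(s)/σ̄(s ∧ λ^l) ds`, `γ⁰ = 0`. -/
def gammaL (M : ℕ) (sigv lamv : ℕ → ℝ) (lamb : ℕ → ℝ) (sigbar : ℝ → ℝ) (l : ℕ) : ℝ :=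
  if l = 0 then 0 else ∫ s in (0:ℝ)..1, (stepFn M sigv lamv s) ^ 2 / sigbar (min s (lamb l))

/-- `EntE` is the entropy function `𝓔` of the model. -/
def IsEntropy (M : ℕ) (sigv lamv : ℕ → ℝ) (m : ℕ) (lamb : ℕ → ℝ) (sigbar : ℝ → ℝ)
    (EntE : ℝ → ℝ) : Prop :=
  EntE 0 = 1 ∧
  ∀ l ∈ Finset.Icc 1 m, ∀ γ : ℝ,
    gammaL M sigv lamv lamb sigbar (l - 1) < γ → γ ≤ gammaL M sigv lamv lamb sigbar l →
      EntE γ = (1 - lamb (l - 1)) -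
        (γ - ∫ s in (0:ℝ)..(lamb (l - 1)), (stepFn M sigv lamv s) ^ 2 / sigbar s) ^ 2 /
          Jint2 (fun r => (stepFn M sigv lamv r) ^ 2) (lamb (l - 1)) 1

/-- The limiting free energy of the `REM(σ)` model. -/
def fREM (σ β : ℝ) : ℝ :=
  if (2 / σ) < β then 2 * (β / (2 / σ)) else 1 + (β / (2 / σ)) ^ 2

/-- The index `l_β`. -/
def lbeta (m : ℕ) (sigb : ℕ → ℝ) (β : ℝ) : ℕ :=
  if β ≤ 2 / sigb m then sInf {l : ℕ | 1 ≤ l ∧ β ≤ 2 / sigb l} else m + 1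

/-- The limiting free energy `f^ψ(β)`, written with the `l_β` split. -/
def fpsiLim (m : ℕ) (sigb lamb : ℕ → ℝ) (β : ℝ) : ℝ :=
  (∑ j ∈ Finset.Icc 1 (lbeta m sigb β - 1), (2 * β / (2 / sigb j)) * (lamb j - lamb (j - 1))) +
  ∑ j ∈ Finset.Icc (lbeta m sigb β) m, (1 + β ^ 2 / (2 / sigb j) ^ 2) * (lamb j - lamb (j - 1))

/-- The set `ℬ` of non-critical inverse temperatures. -/
def critSet (m : ℕ) (sigb : ℕ → ℝ) : Set ℝ :=
  {β | 0 < β ∧ ∀ j ∈ Finset.Icc 1 m, β ≠ 2 / sigb j}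

/-- The partition function `Z_N^ψ(β)`. -/
def ZN (N M : ℕ) (sigv lamv : ℕ → ℝ) (P : MeasureTheory.Measure FieldSp) (β : ℝ) (ω : FieldSp) : ℝ :=
  ∑ v ∈ VN N, Real.exp (β * psiFld N M sigv lamv P v ω)

/-- The free energy `f_N^ψ(β)` on `V_N`. -/
def freeEnergy (N M : ℕ) (sigv lamv : ℕ → ℝ) (P : MeasureTheory.Measure FieldSp) (β : ℝ) (ω : FieldSp) : ℝ :=
  (Real.log ((N : ℝ) ^ 2))⁻¹ * Real.log (ZN N M sigv lamv P β ω)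

/-- The set `A_{N,ρ}` of points at distance at least `N^{1−ρ}` from `ℤ² ∖ V_N`. -/
def AN (N : ℕ) (ρ : ℝ) : Finset Vtx :=
  (VN N).filter fun v => ∀ z : Vtx, z ∉ VN N →
    (N : ℝ) ^ ((1 : ℝ) - ρ) ≤ Real.sqrt (((v.1 : ℝ) - (z.1 : ℝ)) ^ 2 + ((v.2 : ℝ) - (z.2 : ℝ)) ^ 2)

/-- The restricted partition function `Z_{N,ρ}^ψ(β)`. -/
def ZNres (N M : ℕ) (sigv lamv : ℕ → ℝ) (P : MeasureTheory.Measure FieldSp) (β ρ : ℝ) (ω : FieldSp) : ℝ :=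
  ∑ v ∈ AN N ρ, Real.exp (β * psiFld N M sigv lamv P v ω)

/-- The free energy `f_{N,ρ}^ψ(β)` on `A_{N,ρ}`. -/
def freeEnergyRes (N M : ℕ) (sigv lamv : ℕ → ℝ) (P : MeasureTheory.Measure FieldSp) (β ρ : ℝ)
    (ω : FieldSp) : ℝ :=
  (Real.log ((N : ℝ) ^ 2))⁻¹ * Real.log (ZNres N M sigv lamv P β ρ ω)

/-- The Gibbs weight `𝒢_{β,N}({v})`. -/
def gibbsW (N M : ℕ) (sigv lamv : ℕ → ℝ) (P : MeasureTheory.Measure FieldSp) (β : ℝ) (v : Vtx)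
    (ω : FieldSp) : ℝ :=
  Real.exp (β * psiFld N M sigv lamv P v ω) / ZN N M sigv lamv P β ω

/-- The restricted Gibbs weight `𝒢_{β,N,ρ}({v})`. -/
def gibbsWres (N M : ℕ) (sigv lamv : ℕ → ℝ) (P : MeasureTheory.Measure FieldSp) (β ρ : ℝ) (v : Vtx)
    (ω : FieldSp) : ℝ :=
  Real.exp (β * psiFld N M sigv lamv P v ω) / ZNres N M sigv lamv P β ρ ω

/-- `E𝒢_{β,N}^{×s}[F]`: the mean over the disorder of the `s`-fold Gibbs average of `F`. -/
def gibbsExp (N M : ℕ) (sigv lamv : ℕ → ℝ) (P : MeasureTheory.Measure FieldSp) (β : ℝ) (s : ℕ)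
    (F : (Fin s → Vtx) → ℝ) : ℝ :=
  ∫ ω, (∑ vv ∈ Fintype.piFinset (fun _ : Fin s => VN N),
    (∏ i, gibbsW N M sigv lamv P β (vv i) ω) * F vv) ∂P

/-- `E𝒢_{β,N,ρ}^{×s}[F]`, with an `ω`-dependent integrand allowed. -/
def gibbsExpRes (N M : ℕ) (sigv lamv : ℕ → ℝ) (P : MeasureTheory.Measure FieldSp) (β ρ : ℝ) (s : ℕ)
    (F : (Fin s → Vtx) → FieldSp → ℝ) : ℝ :=
  ∫ ω, (∑ vv ∈ Fintype.piFinset (fun _ : Fin s => AN N ρ),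
    (∏ i, gibbsWres N M sigv lamv P β ρ (vv i) ω) * F vv ω) ∂P

/-- `E𝒢_{β,N}^{×s}[F]`, with an `ω`-dependent integrand allowed. -/
def gibbsExpW (N M : ℕ) (sigv lamv : ℕ → ℝ) (P : MeasureTheory.Measure FieldSp) (β : ℝ) (s : ℕ)
    (F : (Fin s → Vtx) → FieldSp → ℝ) : ℝ :=
  ∫ ω, (∑ vv ∈ Fintype.piFinset (fun _ : Fin s => VN N),
    (∏ i, gibbsW N M sigv lamv P β (vv i) ω) * F vv ω) ∂P

/-- The covariance `E[ψ_v ψ_{v'}]`. -/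
def psiCov (N M : ℕ) (sigv lamv : ℕ → ℝ) (P : MeasureTheory.Measure FieldSp) (v v' : Vtx) : ℝ :=
  ∫ ω, psiFld N M sigv lamv P v ω * psiFld N M sigv lamv P v' ω ∂P

/-- `C₀` is a constant witnessing the uniform variance upper bound
`max_{v∈V_N} E[ψ_v²] ≤ 𝒥_{σ²}(1) log N + C₀` for `N` large. -/
def IsVarBound (M : ℕ) (sigv lamv : ℕ → ℝ) (P : ℕ → MeasureTheory.Measure FieldSp) (C₀ : ℝ) : Prop :=
  0 < C₀ ∧ ∃ N₀ : ℕ, ∀ N ≥ N₀, ∀ v ∈ VN N,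
    psiCov N M sigv lamv (P N) v v ≤ Jsig2 M sigv lamv 1 * Real.log N + C₀

/-- The overlap `q^N(v,v')`. -/
def overlapQ (N M : ℕ) (sigv lamv : ℕ → ℝ) (P : MeasureTheory.Measure FieldSp) (C₀ : ℝ) (v v' : Vtx) : ℝ :=
  psiCov N M sigv lamv P v v' / (Jsig2 M sigv lamv 1 * Real.log N + C₀)

/-- Convergence in probability to a constant, for a sequence of random variables on a
sequence of probability spaces. -/
def TendstoInProb (P : ℕ → MeasureTheory.Measure FieldSp) (X : ℕ → FieldSp → ℝ) (c : ℝ) : Prop :=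
  ∀ ε : ℝ, 0 < ε → Tendsto (fun N => P N {ω | ε < |X N ω - c|}) atTop (nhds 0)

/-- Convergence in `L^p` to a constant. -/
def TendstoLp (P : ℕ → MeasureTheory.Measure FieldSp) (X : ℕ → FieldSp → ℝ) (p c : ℝ) : Prop :=
  Tendsto (fun N => ∫ ω, |X N ω - c| ^ p ∂(P N)) atTop (nhds 0)

/-- The branching scale `b_N(v,v')`. -/
def bScale (N : ℕ) (v v' : Vtx) : ℝ :=
  sSup {lam : ℝ | lam ∈ Set.Icc (0:ℝ) 1 ∧ ((nbhd N lam v) ∩ (nbhd N lam v')).Nonempty}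

end GFFCommon

/-!
Almost surely, `ψ_v(α, α')` is the sum of the increments `σ_i (φ_v(c_i) - φ_v(c_{i-1}))`, where
`c_i` is `λ_i` clamped to `[α, α']`. Each `φ_v(c)` is the harmonic average at `v` of the field on
`∂[v]_c`, so these increments are orthogonal, and the variance of `φ_v(c') - φ_v(c)` is the
difference `G_{[v]_c}(v, v) - G_{[v]_{c'}}(v, v)` of two diagonal Green functions. By domain
monotonicity, diagonal Green functions of boxes are compared with those of rectangles, which
separation of variables makes explicit, so that `G_B(v, v)` is `log dist(v, ∂B)` up to a bounded
error. The distance to `∂[v]_c` is `N^(1-c)/2` truncated by the distance to `∂V_N`, and the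
truncation can only decrease the difference of the logarithms, which is thus at most
`(c' - c) log N`. Summing over `i` with the weights `σ_i ^ 2` gives `𝒥_{σ²}(α, α') log N` up to a
constant.
-/

noncomputable section

namespace GaussianFreeField

/-- The four unit steps of the lattice `ℤ²`. -/
def latticeSteps : Finset Vtx := {(1, 0), (-1, 0), (0, 1), (0, -1)}

/-- The sum over the four nearest neighbours, as a linear operator on functions on `ℤ²`. -/
def nbrSum : (Vtx → ℝ) →ₗ[ℝ] Vtx → ℝ := ∑ e ∈ latticeSteps, LinearMap.funLeft ℝ ℝ (· + e)

/-- The negative lattice Laplacian, normalized so that its inverses with zero boundary values are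
the `π / 2`-normalized Green functions. -/
def negLaplacian : (Vtx → ℝ) →ₗ[ℝ] Vtx → ℝ := (2 / Real.pi) • (LinearMap.id - (1 / 4 : ℝ) • nbrSum)

theorem nbrSum_apply (f : Vtx → ℝ) (x : Vtx) : nbrSum f x = ∑ e ∈ latticeSteps, f (x + e) := by
  simp [nbrSum, LinearMap.funLeft_apply]

theorem nbrSum_eq (f : Vtx → ℝ) (x : Vtx) :
    nbrSum f x = f (x.1 + 1, x.2) + f (x.1 - 1, x.2) + f (x.1, x.2 + 1) + f (x.1, x.2 - 1) := by
  rw [nbrSum_apply, latticeSteps, Finset.sum_insert (by decide), Finset.sum_insert (by decide),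
    Finset.sum_insert (by decide), Finset.sum_singleton]
  simp only [Prod.add_def, add_zero, ← sub_eq_add_neg, add_assoc]

theorem negLaplacian_apply (f : Vtx → ℝ) (x : Vtx) :
    negLaplacian f x = 2 / Real.pi * (f x - nbrSum f x / 4) := by
  simp only [negLaplacian, LinearMap.smul_apply, LinearMap.sub_apply, LinearMap.id_apply,
    Pi.smul_apply, Pi.sub_apply, smul_eq_mul]
  ring

theorem negLaplacian_eq_iff {f : Vtx → ℝ} {x : Vtx} {c : ℝ} :
    negLaplacian f x = c ↔ f x = nbrSum f x / 4 + Real.pi / 2 * c := by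
  have hpi := Real.pi_pos
  rw [negLaplacian_apply, div_mul_eq_mul_div, div_eq_iff hpi.ne']
  constructor <;> intro h <;> linarith

theorem nonneg_of_negLaplacian_nonneg {S : Finset Vtx} {g : Vtx → ℝ} (hout : ∀ x ∉ S, 0 ≤ g x)
    (hsuper : ∀ x ∈ S, 0 ≤ negLaplacian g x) (x : Vtx) : 0 ≤ g x := by
  by_contra! hx
  have mem_of_neg : ∀ y, g y < 0 → y ∈ S := fun y hy => by
    by_contra hyS
    exact (hout y hyS).not_gt hy
  obtain ⟨m, -, hm⟩ := S.exists_min_image g ⟨x, mem_of_neg x hx⟩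
  have hneg : g m < 0 := (hm x (mem_of_neg x hx)).trans_lt hx
  have hmin : ∀ y, g m ≤ g y := fun y =>
    if hy : y ∈ S then hm y hy else hneg.le.trans (hout y hy)
  -- At a rightmost minimum the average over the neighbours would be strictly larger.
  obtain ⟨z, hz, hright⟩ := (S.filter fun y => g y = g m).exists_max_image Prod.fst
    ⟨m, Finset.mem_filter.2 ⟨mem_of_neg m hneg, rfl⟩⟩
  obtain ⟨hzS, hgz⟩ := Finset.mem_filter.1 hz
  have havg : nbrSum g z / 4 ≤ g z := by
    have h := hsuper z hzS
    rw [negLaplacian_apply] at h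
    exact sub_nonneg.1 (nonneg_of_mul_nonneg_right h (by positivity))
  rw [nbrSum_eq] at havg
  have hstep : g (z.1 + 1, z.2) = g m := by
    linarith [hmin (z.1 + 1, z.2), hmin (z.1 - 1, z.2), hmin (z.1, z.2 + 1), hmin (z.1, z.2 - 1)]
  have := hright (z.1 + 1, z.2) (Finset.mem_filter.2 ⟨mem_of_neg _ (hstep ▸ hneg), hstep⟩)
  simp at this

theorem eq_zero_of_negLaplacian_eq_zero {S : Finset Vtx} {g : Vtx → ℝ} (hout : ∀ x ∉ S, g x = 0)
    (hharm : ∀ x ∈ S, negLaplacian g x = 0) : g = 0 := by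
  funext x
  have hpos := nonneg_of_negLaplacian_nonneg (fun y hy => (hout y hy).ge)
    (fun y hy => (hharm y hy).ge) x
  have hneg := nonneg_of_negLaplacian_nonneg (g := -g) (S := S)
    (fun y hy => by simp [hout y hy]) (fun y hy => by simp [hharm y hy]) x
  exact le_antisymm (neg_nonneg.1 hneg) hpos

theorem exists_negLaplacian_eq (S : Finset Vtx) (h : Vtx → ℝ) :
    ∃ g : Vtx → ℝ, (∀ x ∉ S, g x = 0) ∧ ∀ x ∈ S, negLaplacian g x = h x := by
  let extend := Function.ExtendByZero.linearMap ℝ (Subtype.val : S → Vtx)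
  have extend_of_notMem : ∀ f, ∀ x ∉ S, extend f x = 0 := fun f x hx =>
    Function.extend_apply' _ _ _ fun ⟨y, hy⟩ => hx (hy ▸ y.2)
  let A : (S → ℝ) →ₗ[ℝ] S → ℝ := LinearMap.funLeft ℝ ℝ Subtype.val ∘ₗ negLaplacian ∘ₗ extend
  have hinj : Function.Injective A := by
    refine (injective_iff_map_eq_zero A).2 fun f hf => ?_
    have h0 : extend f = 0 := eq_zero_of_negLaplacian_eq_zero (extend_of_notMem f)
      fun x hx => congrFun hf ⟨x, hx⟩
    funext x
    rw [← Subtype.val_injective.extend_apply f 0 x]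
    exact congrFun h0 x
  obtain ⟨f, hf⟩ := LinearMap.injective_iff_surjective.1 hinj fun x => h x
  exact ⟨extend f, extend_of_notMem f, fun x hx => congrFun hf ⟨x, hx⟩⟩

/-- `g` is the Green function with pole `v` of simple random walk killed on leaving `S`. -/
structure IsGreenKernel (S : Finset Vtx) (v : Vtx) (g : Vtx → ℝ) : Prop where
  eq_zero_of_notMem : ∀ x ∉ S, g x = 0
  negLaplacian_eq : ∀ x ∈ S, negLaplacian g x = (Pi.single v 1 : Vtx → ℝ) x

namespace IsGreenKernel

variable {S T : Finset Vtx} {v : Vtx} {g h : Vtx → ℝ}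

theorem nonneg (hg : IsGreenKernel S v g) (x : Vtx) : 0 ≤ g x := by
  refine nonneg_of_negLaplacian_nonneg (fun y hy => (hg.eq_zero_of_notMem y hy).ge)
    (fun y hy => ?_) x
  rw [hg.negLaplacian_eq y hy]
  exact (Pi.single_nonneg.2 zero_le_one : (0 : Vtx → ℝ) ≤ Pi.single v 1) y

theorem mono (hg : IsGreenKernel S v g) (hh : IsGreenKernel T v h) (hST : S ⊆ T) (x : Vtx) :
    g x ≤ h x := by
  refine sub_nonneg.1 (nonneg_of_negLaplacian_nonneg (g := h - g) (S := S) (fun y hy => ?_)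
    (fun y hy => ?_) x)
  · rw [Pi.sub_apply, hg.eq_zero_of_notMem y hy, sub_zero]
    exact hh.nonneg y
  · rw [map_sub, Pi.sub_apply, hg.negLaplacian_eq y hy, hh.negLaplacian_eq y (hST hy), sub_self]

theorem eq_zero (hg : IsGreenKernel S v g) (hv : v ∉ S) : g = 0 :=
  eq_zero_of_negLaplacian_eq_zero hg.eq_zero_of_notMem fun x hx => by
    rw [hg.negLaplacian_eq x hx, Pi.single_eq_of_ne (ne_of_mem_of_not_mem hx hv)]

end IsGreenKernel

/-- The Green function of `S` with pole `v`. -/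
def greenKernel (S : Finset Vtx) (v : Vtx) : Vtx → ℝ :=
  (exists_negLaplacian_eq S (Pi.single v 1)).choose

theorem greenKernel_spec (S : Finset Vtx) (v : Vtx) : IsGreenKernel S v (greenKernel S v) :=
  let h := (exists_negLaplacian_eq S (Pi.single v 1)).choose_spec
  ⟨h.1, h.2⟩

section SummationByParts

variable {f g : Vtx → ℝ}

theorem tsum_negLaplacian_mul (hf : f.support.Finite) (hg : g.support.Finite) :
    ∑' x, negLaplacian f x * g x = ∑' x, f x * negLaplacian g x := by
  have summable_left : ∀ k : Vtx → ℝ, Summable fun x => k x * g x := fun k =>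
    summable_of_hasFiniteSupport (hg.subset (Function.support_mul_subset_right _ _))
  have summable_right : ∀ k : Vtx → ℝ, Summable fun x => f x * k x := fun k =>
    summable_of_hasFiniteSupport (hf.subset (Function.support_mul_subset_left _ _))
  have shift : ∀ e : Vtx, ∑' x, f (x + e) * g x = ∑' x, f x * g (x + -e) := fun e => by
    rw [← (Equiv.addRight e).tsum_eq fun x => f x * g (x + -e)]
    simp
  have hnbr : ∑' x, nbrSum f x * g x = ∑' x, f x * nbrSum g x := by
    simp only [nbrSum_apply, Finset.sum_mul, Finset.mul_sum]
    rw [Summable.tsum_finsetSum fun e _ => summable_left fun x => f (x + e),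
      Summable.tsum_finsetSum fun e _ => summable_right fun x => g (x + e)]
    exact Finset.sum_nbij' (- ·) (- ·) (by decide) (by decide) (fun e _ => neg_neg e)
      (fun e _ => neg_neg e) fun e _ => shift e
  have hleft : ∀ x, negLaplacian f x * g x
      = 2 / Real.pi * (f x * g x - 1 / 4 * (nbrSum f x * g x)) := fun x => by
    rw [negLaplacian_apply]; ring
  have hright : ∀ x, f x * negLaplacian g x
      = 2 / Real.pi * (f x * g x - 1 / 4 * (f x * nbrSum g x)) := fun x => by
    rw [negLaplacian_apply]; ring
  simp only [hleft, hright, tsum_mul_left]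
  rw [(summable_left f).tsum_sub ((summable_left _).mul_left _),
    (summable_right g).tsum_sub ((summable_right _).mul_left _), tsum_mul_left, tsum_mul_left, hnbr]

theorem tsum_mul_negLaplacian_self_nonneg (hf : f.support.Finite) :
    0 ≤ ∑' x, f x * negLaplacian f x := by
  have hsum : ∀ k : Vtx → ℝ, Summable fun x => f x * k x := fun k =>
    summable_of_hasFiniteSupport (hf.subset (Function.support_mul_subset_left _ _))
  have hsq : ∀ e : Vtx, ∑' x, f (x + e) * f (x + e) = ∑' x, f x * f x := fun e =>
    (Equiv.addRight e).tsum_eq fun x => f x * f x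
  have hshift : ∀ e : Vtx, ∑' x, f x * f (x + e) ≤ ∑' x, f x * f x := fun e => by
    have hs : Summable fun x => f (x + e) * f (x + e) :=
      (Equiv.addRight e).summable_iff.2 (hsum f)
    have h : ∑' x, 2 * (f x * f (x + e)) ≤ ∑' x, (f x * f x + f (x + e) * f (x + e)) :=
      ((hsum _).mul_left 2).tsum_le_tsum
        (fun x => by linarith [two_mul_le_add_sq (f x) (f (x + e))]) ((hsum f).add hs)
    rw [tsum_mul_left, (hsum f).tsum_add hs, hsq] at h
    linarith
  have hnbr : ∑' x, f x * nbrSum f x ≤ 4 * ∑' x, f x * f x := by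
    simp only [nbrSum_apply, Finset.mul_sum]
    rw [Summable.tsum_finsetSum fun e _ => hsum fun x => f (x + e)]
    exact (Finset.sum_le_card_nsmul _ _ _ fun e _ => hshift e).trans_eq (by simp [latticeSteps])
  have hsplit : ∀ x, f x * negLaplacian f x
      = 2 / Real.pi * (f x * f x - 1 / 4 * (f x * nbrSum f x)) := fun x => by
    rw [negLaplacian_apply]; ring
  simp only [hsplit, tsum_mul_left]
  rw [(hsum f).tsum_sub ((hsum _).mul_left _), tsum_mul_left]
  have := Real.pi_pos
  exact mul_nonneg (by positivity) (by linarith)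

end SummationByParts

theorem sinh_sub_add_sinh_add (c θ : ℝ) :
    Real.sinh (c - θ) + Real.sinh (c + θ) = 2 * Real.cosh θ * Real.sinh c := by
  rw [Real.sinh_sub, Real.sinh_add]
  ring

theorem nat_mul_sinh_le_sinh_mul {θ : ℝ} (hθ : 0 ≤ θ) (n : ℕ) :
    n * Real.sinh θ ≤ Real.sinh (θ * n) := by
  induction n with
  | zero => simp
  | succ n ih =>
    have hs : 0 ≤ Real.sinh θ := Real.sinh_nonneg_iff.2 hθ
    have hsn : 0 ≤ Real.sinh (θ * n) := Real.sinh_nonneg_iff.2 (by positivity)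
    rw [Nat.cast_succ, mul_add, mul_one, Real.sinh_add]
    nlinarith [Real.one_le_cosh θ, Real.one_le_cosh (θ * n)]

theorem sinh_mul_nat_le {θ : ℝ} (hθ : 0 ≤ θ) (n : ℕ) :
    Real.sinh (θ * n) ≤ n * Real.sinh θ * Real.cosh (θ * n) := by
  induction n with
  | zero => simp
  | succ n ih =>
    have hs : 0 ≤ Real.sinh θ := Real.sinh_nonneg_iff.2 hθ
    have hsn : 0 ≤ Real.sinh (θ * n) := Real.sinh_nonneg_iff.2 (by positivity)
    have hc := Real.one_le_cosh θ
    have hcn := Real.cosh_pos (θ * n)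
    rw [Nat.cast_succ, mul_add, mul_one, Real.sinh_add, Real.cosh_add]
    calc Real.sinh (θ * n) * Real.cosh θ + Real.cosh (θ * n) * Real.sinh θ
        ≤ n * Real.sinh θ * Real.cosh (θ * n) * Real.cosh θ
          + Real.cosh (θ * n) * Real.cosh θ * Real.sinh θ := by
            gcongr
            exact le_mul_of_one_le_right hcn.le hc
      _ = (n + 1) * Real.sinh θ * (Real.cosh (θ * n) * Real.cosh θ) := by ring
      _ ≤ _ := by
        gcongr
        exact le_add_of_nonneg_right (mul_nonneg hsn hs)

theorem one_sub_tanh_le_inv_sinh {x : ℝ} (hx : 0 < x) : 1 - Real.tanh x ≤ 1 / Real.sinh x := by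
  have hs := Real.sinh_pos_iff.2 hx
  have hc := Real.cosh_pos x
  rw [Real.tanh_eq_sinh_div_cosh, one_sub_div hc.ne', div_le_div_iff₀ hc hs, Real.cosh_sub_sinh,
    one_mul]
  have hexp : Real.exp (-x) ≤ 1 := Real.exp_le_one_iff.2 (neg_nonpos.2 hx.le)
  nlinarith [Real.sinh_lt_cosh (x := x)]

theorem inv_sin_le {a : ℝ} (h0 : 0 < a) (h1 : a ≤ Real.pi / 2) :
    1 / Real.sin a ≤ 1 / a + 2 := by
  have hs : 0 < Real.sin a := Real.sin_pos_of_pos_of_lt_pi h0 (by linarith [Real.pi_pos])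
  have key : a ≤ (1 + 2 * a) * Real.sin a := by
    rcases le_or_gt a 1 with h | h
    · have hsin := (Real.sin_gt_sub_cube h0).le
      have hcube : a ^ 3 ≤ a ^ 2 := pow_le_pow_of_le_one h0.le h (by norm_num)
      nlinarith
    · have hsin := Real.mul_le_sin h0.le h1
      have hpi : 1 / 2 ≤ 2 / Real.pi := by
        rw [div_le_div_iff₀ two_pos Real.pi_pos]
        linarith [Real.pi_lt_four]
      nlinarith
  rw [div_add' _ _ _ h0.ne', div_le_div_iff₀ hs h0]
  linarith

/-- The solution `θ` of `cosh θ + cos t = 2`: the function `exp (θ x) * cos (t y)` is discrete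
harmonic on `ℤ²`. -/
def dispersion (t : ℝ) : ℝ := 2 * Real.arsinh (Real.sin (t / 2))

theorem cosh_dispersion (t : ℝ) : Real.cosh (dispersion t) = 2 - Real.cos t := by
  rw [dispersion, Real.cosh_two_mul, Real.cosh_sq, Real.sinh_arsinh, Real.sin_sq_eq_half_sub,
    mul_div_cancel₀ t two_ne_zero]
  ring

theorem sinh_dispersion (t : ℝ) : Real.sinh (dispersion t)
    = 2 * Real.sin (t / 2) * √(1 + Real.sin (t / 2) ^ 2) := by
  rw [dispersion, Real.sinh_two_mul, Real.cosh_arsinh, Real.sinh_arsinh]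

section Dispersion

variable {t : ℝ}

theorem sin_half_pos (h0 : 0 < t) (h1 : t < Real.pi) : 0 < Real.sin (t / 2) :=
  Real.sin_pos_of_pos_of_lt_pi (by linarith) (by linarith)

theorem dispersion_pos (h0 : 0 < t) (h1 : t < Real.pi) : 0 < dispersion t :=
  mul_pos two_pos (Real.arsinh_pos_iff.2 (sin_half_pos h0 h1))

theorem two_mul_sin_half_le_sinh_dispersion (h0 : 0 < t) (h1 : t < Real.pi) :
    2 * Real.sin (t / 2) ≤ Real.sinh (dispersion t) := by
  rw [sinh_dispersion]
  refine le_mul_of_one_le_right (by linarith [sin_half_pos h0 h1]) (Real.one_le_sqrt.2 ?_)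
  exact le_add_of_nonneg_right (sq_nonneg _)

theorem inv_two_mul_sinh_dispersion_le (h0 : 0 < t) (h1 : t < Real.pi) :
    1 / (2 * Real.sinh (dispersion t)) ≤ 1 / (2 * t) + 1 / 2 := by
  have hs := sin_half_pos h0 h1
  have hsinh := two_mul_sin_half_le_sinh_dispersion h0 h1
  calc 1 / (2 * Real.sinh (dispersion t)) ≤ 1 / (2 * (2 * Real.sin (t / 2))) := by gcongr
    _ = 1 / Real.sin (t / 2) / 4 := by rw [div_div]; ring_nf
    _ ≤ (1 / (t / 2) + 2) / 4 := by
      gcongr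
      exact inv_sin_le (by linarith) (by linarith)
    _ = 1 / (2 * t) + 1 / 2 := by field_simp; ring

theorem le_inv_two_mul_sinh_dispersion (h0 : 0 < t) (h1 : t < Real.pi) :
    1 / (2 * t) - 1 / 8 ≤ 1 / (2 * Real.sinh (dispersion t)) := by
  rw [sinh_dispersion]
  have hst : Real.sin (t / 2) ≤ t / 2 := Real.sin_le (by linarith)
  have hs1 := Real.sin_le_one (t / 2)
  have hs := sin_half_pos h0 h1
  set s := Real.sin (t / 2)
  have hsqrt : √(1 + s ^ 2) ≤ 1 + s / 2 := by
    rw [Real.sqrt_le_left (by positivity)]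
    nlinarith
  calc 1 / (2 * t) - 1 / 8 ≤ 1 / (4 * s) - 1 / 8 := by
        gcongr 1 / ?_ - _
        linarith
    _ ≤ 1 / (2 * (2 * s * (1 + s / 2))) := by
        rw [div_sub_div _ _ (by positivity) (by positivity),
          div_le_div_iff₀ (by positivity) (by positivity)]
        nlinarith [pow_pos hs 2, pow_pos hs 3]
    _ ≤ _ := by gcongr

end Dispersion

/-- The Green function on `(0, W)`, with pole `d` and zero boundary values, of the one-dimensional
operator `f ↦ 2 cosh θ f(x) - f(x + 1) - f(x - 1)`. -/
def resolventKernel (θ W d x : ℝ) : ℝ :=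
  Real.sinh (θ * min x d) * Real.sinh (θ * (W - max x d)) / (Real.sinh θ * Real.sinh (θ * W))

section ResolventKernel

variable {θ W d : ℝ}

theorem resolventKernel_zero (hd : 0 ≤ d) : resolventKernel θ W d 0 = 0 := by
  simp [resolventKernel, min_eq_left hd]

theorem resolventKernel_right (hd : d ≤ W) : resolventKernel θ W d W = 0 := by
  simp [resolventKernel, max_eq_left hd]

theorem resolventKernel_add_one_add_sub_one {x : ℝ} (hθ : 0 < θ) (hW : 0 < W)
    (hx : x + 1 ≤ d ∨ x = d ∨ d + 1 ≤ x) :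
    resolventKernel θ W d (x + 1) + resolventKernel θ W d (x - 1)
      = 2 * Real.cosh θ * resolventKernel θ W d x - if x = d then 1 else 0 := by
  have hsinh : Real.sinh θ ≠ 0 := (Real.sinh_pos_iff.2 hθ).ne'
  have hsinhW : Real.sinh (θ * W) ≠ 0 := (Real.sinh_pos_iff.2 (by positivity)).ne'
  simp only [resolventKernel]
  rcases hx with h | rfl | h
  · rw [min_eq_left h, min_eq_left (by linarith), min_eq_left (by linarith), max_eq_right h,
      max_eq_right (by linarith), max_eq_right (by linarith), if_neg (by linarith), mul_add,
      mul_sub θ x, mul_one]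
    linear_combination (sinh_sub_add_sinh_add (θ * x) θ) * Real.sinh (θ * (W - d)) /
      (Real.sinh θ * Real.sinh (θ * W))
  · have hpole : Real.sinh (θ * x) * Real.sinh (θ * (W - x) - θ)
        + Real.sinh (θ * x - θ) * Real.sinh (θ * (W - x))
        = 2 * Real.cosh θ * (Real.sinh (θ * x) * Real.sinh (θ * (W - x)))
          - Real.sinh θ * Real.sinh (θ * W) := by
      rw [show θ * W = θ * x + θ * (W - x) by ring, Real.sinh_sub, Real.sinh_sub, Real.sinh_add]
      ring
    rw [min_self, max_self, min_eq_right (by linarith), max_eq_left (by linarith),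
      min_eq_left (by linarith), max_eq_right (by linarith), if_pos rfl, mul_sub θ x, mul_one,
      show θ * (W - (x + 1)) = θ * (W - x) - θ by ring]
    rw [← add_div, hpole, sub_div, div_self (mul_ne_zero hsinh hsinhW), mul_div_assoc]
  · have hd : d ≤ x - 1 := by linarith
    rw [min_eq_right (by linarith), min_eq_right hd, min_eq_right (by linarith),
      max_eq_left (by linarith), max_eq_left hd, max_eq_left (by linarith), if_neg (by linarith),
      show θ * (W - (x + 1)) = θ * (W - x) - θ by ring,
      show θ * (W - (x - 1)) = θ * (W - x) + θ by ring]
    linear_combination (sinh_sub_add_sinh_add (θ * (W - x)) θ) * Real.sinh (θ * d) /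
      (Real.sinh θ * Real.sinh (θ * W))

theorem resolventKernel_self_le_inv (hθ : 0 < θ) (hd : 0 < d) (hdW : d < W) :
    resolventKernel θ W d d ≤ 1 / (2 * Real.sinh θ) := by
  have hsinh : 0 < Real.sinh θ := Real.sinh_pos_iff.2 hθ
  have ha : 0 < Real.sinh (θ * d) := Real.sinh_pos_iff.2 (by positivity)
  have hb : 0 < Real.sinh (θ * (W - d)) := Real.sinh_pos_iff.2 (mul_pos hθ (sub_pos.2 hdW))
  have hca := (Real.sinh_lt_cosh (x := θ * d)).le
  have hcb := (Real.sinh_lt_cosh (x := θ * (W - d))).le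
  rw [resolventKernel, min_self, max_self, show θ * W = θ * d + θ * (W - d) by ring,
    Real.sinh_add, div_le_div_iff₀ (mul_pos hsinh (by positivity)) (by positivity)]
  nlinarith [mul_le_mul_of_nonneg_left hcb (mul_pos ha hsinh).le,
    mul_le_mul_of_nonneg_left hca (mul_pos hb hsinh).le]

theorem resolventKernel_self_le_pole {d : ℕ} (hθ : 0 < θ) (hd : 0 < d) (hdW : d < W) :
    resolventKernel θ W d d ≤ d := by
  have hsinh : 0 < Real.sinh θ := Real.sinh_pos_iff.2 hθ
  have ha : 0 < Real.sinh (θ * d) := Real.sinh_pos_iff.2 (by positivity)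
  have hb : 0 < Real.sinh (θ * (W - d)) := Real.sinh_pos_iff.2 (mul_pos hθ (sub_pos.2 hdW))
  rw [resolventKernel, min_self, max_self, show θ * W = θ * d + θ * (W - d) by ring,
    Real.sinh_add, div_le_iff₀ (mul_pos hsinh (by positivity))]
  calc Real.sinh (θ * d) * Real.sinh (θ * (W - d))
      ≤ d * Real.sinh θ * Real.cosh (θ * d) * Real.sinh (θ * (W - d)) :=
        mul_le_mul_of_nonneg_right (sinh_mul_nat_le hθ.le d) hb.le
    _ = d * (Real.sinh θ * (0 + Real.cosh (θ * d) * Real.sinh (θ * (W - d)))) := by ring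
    _ ≤ _ := by
      gcongr
      exact (mul_pos ha (Real.cosh_pos _)).le

theorem resolventKernel_midpoint {n : ℝ} (hθ : 0 < θ) (hn : 0 < n) :
    resolventKernel θ (2 * n) n n = 1 / (2 * Real.sinh θ) * Real.tanh (θ * n) := by
  have hs : Real.sinh (θ * n) ≠ 0 := (Real.sinh_pos_iff.2 (by positivity)).ne'
  rw [resolventKernel, min_self, max_self, Real.tanh_eq_sinh_div_cosh,
    show θ * (2 * n - n) = θ * n by ring, mul_left_comm, Real.sinh_two_mul]
  have := (Real.cosh_pos (θ * n)).ne'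
  field_simp

end ResolventKernel

/-- The frequencies `t` for which `cos (t y)` is even and vanishes at `y = L`. -/
def oddFreq (L k : ℕ) : ℝ := Real.pi * (2 * k + 1) / (2 * L)

section OddFreq

variable {L k : ℕ}

theorem oddFreq_pos (hk : k < L) : 0 < oddFreq L k := by
  have hL : (0 : ℝ) < L := by exact_mod_cast hk.pos
  have := Real.pi_pos
  unfold oddFreq
  positivity

theorem oddFreq_lt_pi (hk : k < L) : oddFreq L k < Real.pi := by
  have hL : (0 : ℝ) < L := by exact_mod_cast hk.pos
  have hkL : (k : ℝ) + 1 ≤ L := by exact_mod_cast hk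
  rw [oddFreq, div_lt_iff₀ (by positivity)]
  exact mul_lt_mul_of_pos_left (by linarith) Real.pi_pos

theorem cos_oddFreq_mul_eq_zero (hk : k < L) {y : ℤ} (hy : |y| = L) :
    Real.cos (oddFreq L k * y) = 0 := by
  have hL : (L : ℝ) ≠ 0 := by exact_mod_cast hk.pos.ne'
  have habs : |(y : ℝ)| = L := by exact_mod_cast hy
  rw [← Real.cos_abs, abs_mul, habs, abs_of_pos (oddFreq_pos hk), Real.cos_eq_zero_iff]
  exact ⟨k, by unfold oddFreq; push_cast; field_simp⟩

theorem two_mul_sin_mul_sum_cos (L : ℕ) (φ : ℝ) :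
    2 * Real.sin φ * ∑ k ∈ Finset.range L, Real.cos ((2 * k + 1) * φ)
      = Real.sin (2 * L * φ) := by
  induction L with
  | zero => simp
  | succ n ih =>
    rw [Finset.sum_range_succ, mul_add, ih, Nat.cast_succ,
      show 2 * ((n : ℝ) + 1) * φ = (2 * n + 1) * φ + φ by ring,
      show 2 * (n : ℝ) * φ = (2 * n + 1) * φ - φ by ring, Real.sin_add, Real.sin_sub]
    ring

theorem sum_cos_oddFreq_mul {y : ℤ} (hy : |y| < L) :
    ∑ k ∈ Finset.range L, Real.cos (oddFreq L k * y) = if y = 0 then (L : ℝ) else 0 := by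
  split_ifs with h
  · simp [h]
  have hpi := Real.pi_pos
  have hL : (0 : ℝ) < L := by exact_mod_cast (abs_nonneg y).trans_lt hy
  have hyL : |(y : ℝ)| < L := by exact_mod_cast hy
  obtain ⟨hlo, hhi⟩ := abs_lt.1 hyL
  have hsin : Real.sin (Real.pi * y / (2 * L)) ≠ 0 := by
    rw [Ne, Real.sin_eq_zero_iff_of_lt_of_lt]
    · have : (y : ℝ) ≠ 0 := by exact_mod_cast h
      positivity
    · rw [lt_div_iff₀ (by positivity)]
      nlinarith
    · rw [div_lt_iff₀ (by positivity)]
      nlinarith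
  have hsum := two_mul_sin_mul_sum_cos L (Real.pi * y / (2 * L))
  rw [show 2 * (L : ℝ) * (Real.pi * y / (2 * L)) = y * Real.pi by field_simp,
    Real.sin_int_mul_pi] at hsum
  rw [← (mul_eq_zero_iff_left (mul_ne_zero two_ne_zero hsin)).1 hsum]
  refine Finset.sum_congr rfl fun k _ => congrArg Real.cos ?_
  unfold oddFreq
  ring

end OddFreq

/-- The open rectangle `(0, W) × (-L, L)`. -/
def openRect (W L : ℕ) : Finset Vtx := Finset.Ioo 0 (W : ℤ) ×ˢ Finset.Ioo (-L : ℤ) L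

theorem mem_openRect {W L : ℕ} {p : Vtx} :
    p ∈ openRect W L ↔ (0 < p.1 ∧ p.1 < W) ∧ -L < p.2 ∧ p.2 < L := by
  rw [openRect, Finset.mem_product, Finset.mem_Ioo, Finset.mem_Ioo]

/-- A separated solution of the Poisson equation with charge `cos (t y)` along the line `x = d`,
vanishing for `x = 0` and `x = W`. -/
def separatedMode (W d : ℕ) (t : ℝ) (p : Vtx) : ℝ :=
  Real.cos (t * p.2) * resolventKernel (dispersion t) W d p.1

/-- The Green function of `openRect W L` with pole `(d, 0)`, continued beyond the rectangle, as a
cosine series in the second variable. -/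
def rectSeries (W d L : ℕ) : Vtx → ℝ :=
  (2 * Real.pi / L) • ∑ k ∈ Finset.range L, separatedMode W d (oddFreq L k)

section RectSeries

variable {W d L : ℕ}

theorem negLaplacian_separatedMode {t : ℝ} (h0 : 0 < t) (h1 : t < Real.pi) (hW : 0 < W) (p : Vtx) :
    negLaplacian (separatedMode W d t) p
      = (2 * Real.pi)⁻¹ * if p.1 = d then Real.cos (t * p.2) else 0 := by
  obtain ⟨x, y⟩ := p
  have hx : (x : ℝ) + 1 ≤ d ∨ (x : ℝ) = d ∨ (d : ℝ) + 1 ≤ x := by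
    rcases lt_trichotomy x d with h | h | h
    · exact Or.inl (by exact_mod_cast h)
    · exact Or.inr (Or.inl (by exact_mod_cast h))
    · exact Or.inr (Or.inr (by exact_mod_cast h))
  have hu := resolventKernel_add_one_add_sub_one (dispersion_pos h0 h1) (Nat.cast_pos.2 hW) hx
  rw [cosh_dispersion] at hu
  have hpole : (if (x : ℝ) = d then (1 : ℝ) else 0) = if x = d then 1 else 0 := by norm_cast
  have hnbr : nbrSum (separatedMode W d t) (x, y) = 4 * separatedMode W d t (x, y)
      - if x = d then Real.cos (t * y) else 0 := by
    simp only [nbrSum_eq, separatedMode, Int.cast_add, Int.cast_sub, Int.cast_one, mul_add,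
      mul_sub, mul_one, Real.cos_add, Real.cos_sub]
    rw [← mul_boole]
    linear_combination Real.cos (t * y) * (hu - hpole)
  rw [negLaplacian_apply, hnbr]
  have := Real.pi_pos
  field_simp
  ring

theorem rectSeries_apply (W d L : ℕ) (p : Vtx) : rectSeries W d L p
    = 2 * Real.pi / L * ∑ k ∈ Finset.range L, separatedMode W d (oddFreq L k) p := by
  rw [rectSeries, Pi.smul_apply, Finset.sum_apply, smul_eq_mul]

theorem rectSeries_diag (W d L : ℕ) : rectSeries W d L (d, 0)
    = 2 * Real.pi / L
      * ∑ k ∈ Finset.range L, resolventKernel (dispersion (oddFreq L k)) W d d := by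
  simp [rectSeries_apply, separatedMode]

theorem rectSeries_eq_zero {p : Vtx} (hdW : d ≤ W)
    (hp : p.1 = 0 ∨ p.1 = W ∨ |p.2| = L) : rectSeries W d L p = 0 := by
  rw [rectSeries_apply]
  refine mul_eq_zero_of_right _ (Finset.sum_eq_zero fun k hk => ?_)
  rw [separatedMode]
  rcases hp with h | h | h
  · rw [h, Int.cast_zero, resolventKernel_zero d.cast_nonneg, mul_zero]
  · rw [h, Int.cast_natCast, resolventKernel_right (Nat.cast_le.2 hdW), mul_zero]
  · rw [cos_oddFreq_mul_eq_zero (Finset.mem_range.1 hk) h, zero_mul]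

theorem negLaplacian_rectSeries (hW : 0 < W) {p : Vtx} (hp : |p.2| < L) :
    negLaplacian (rectSeries W d L) p = (Pi.single ((d : ℤ), 0) 1 : Vtx → ℝ) p := by
  have hL : (0 : ℝ) < L := by exact_mod_cast (abs_nonneg p.2).trans_lt hp
  have hmode : ∀ k ∈ Finset.range L, negLaplacian (separatedMode W d (oddFreq L k)) p
      = (2 * Real.pi)⁻¹ * if p.1 = d then Real.cos (oddFreq L k * p.2) else 0 := fun k hk =>
    have hkL := Finset.mem_range.1 hk
    negLaplacian_separatedMode (oddFreq_pos hkL) (oddFreq_lt_pi hkL) hW p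
  rw [rectSeries, map_smul, map_sum, Pi.smul_apply, Finset.sum_apply, Finset.sum_congr rfl hmode,
    ← Finset.mul_sum, smul_eq_mul]
  simp only [Pi.single_apply, Prod.ext_iff]
  by_cases hx : p.1 = d
  · simp only [hx, if_true, true_and, sum_cos_oddFreq_mul hp]
    have := Real.pi_pos
    split_ifs
    · field_simp
    · simp
  · simp [hx]

/-- The Green function of `openRect W L` with pole `(d, 0)`. -/
def rectKernel (W d L : ℕ) (p : Vtx) : ℝ := if p ∈ openRect W L then rectSeries W d L p else 0

theorem isGreenKernel_rectKernel (hdW : d ≤ W) :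
    IsGreenKernel (openRect W L) (d, 0) (rectKernel W d L) where
  eq_zero_of_notMem _ hp := if_neg hp
  negLaplacian_eq p hp := by
    have heq : ∀ q : Vtx, 0 ≤ q.1 → q.1 ≤ W → |q.2| ≤ L →
        rectKernel W d L q = rectSeries W d L q := fun q h0 hW hL => by
      refine ite_eq_left_iff.2 fun hq => (rectSeries_eq_zero hdW ?_).symm
      by_contra! hne
      obtain ⟨hlo, hhi⟩ := abs_lt.1 (hL.lt_of_ne hne.2.2)
      exact hq (mem_openRect.2 ⟨⟨h0.lt_of_ne hne.1.symm, hW.lt_of_ne hne.2.1⟩, hlo, hhi⟩)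
    obtain ⟨⟨h0, hW⟩, hlo, hhi⟩ := mem_openRect.1 hp
    have hW0 : 0 < W := by omega
    rw [← negLaplacian_rectSeries hW0 (abs_lt.2 ⟨hlo, hhi⟩), negLaplacian_apply,
      negLaplacian_apply, nbrSum_eq, nbrSum_eq, heq p, heq (p.1 + 1, p.2), heq (p.1 - 1, p.2),
      heq (p.1, p.2 + 1), heq (p.1, p.2 - 1)]
    all_goals (try rw [abs_le]); lia

end RectSeries

theorem sum_Ico_two_div_odd_le_log {m n : ℕ} (hm : 0 < m) (hmn : m ≤ n) :
    ∑ k ∈ Finset.Ico m n, 2 / (2 * (k : ℝ) + 1) ≤ Real.log (n / m) := by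
  induction n, hmn using Nat.le_induction with
  | base => simp
  | succ n hmn ih =>
    have hm₀ : (m : ℝ) ≠ 0 := by exact_mod_cast hm.ne'
    have hn₀ : (n : ℝ) ≠ 0 := by exact_mod_cast (hm.trans_le hmn).ne'
    have hlog := Real.le_log_one_add_of_nonneg (x := 1 / (n : ℝ)) (by positivity)
    rw [Finset.sum_Ico_succ_top hmn,
      show ((n + 1 : ℕ) : ℝ) / m = n / m * (1 + 1 / n) by push_cast; field_simp,
      Real.log_mul (div_ne_zero hn₀ hm₀) (by positivity),
      show 2 / (2 * (n : ℝ) + 1) = 2 * (1 / (n : ℝ)) / (1 / n + 2) by field_simp; ring]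
    exact add_le_add ih hlog

theorem log_le_sum_range_two_div_odd (n : ℕ) :
    Real.log (n + 1) ≤ ∑ k ∈ Finset.range n, 2 / (2 * (k : ℝ) + 1) := by
  induction n with
  | zero => simp
  | succ n ih =>
    have hlog := Real.log_le_sub_one_of_pos (x := 1 + 1 / ((n : ℝ) + 1)) (by positivity)
    have hterm : 1 / ((n : ℝ) + 1) ≤ 2 / (2 * (n : ℝ) + 1) := by
      rw [div_le_div_iff₀ (by positivity) (by positivity)]
      linarith
    rw [Finset.sum_range_succ, Nat.cast_succ,
      show (n : ℝ) + 1 + 1 = (n + 1) * (1 + 1 / (n + 1)) by field_simp,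
      Real.log_mul (by positivity) (by positivity)]
    linarith

theorem sum_range_inv_odd_sq_le (n : ℕ) :
    ∑ k ∈ Finset.range n, 1 / (2 * (k : ℝ) + 1) ^ 2 ≤ 2 := by
  suffices h : ∑ k ∈ Finset.range n, 1 / (2 * (k : ℝ) + 1) ^ 2 ≤ 2 - 2 / (2 * (n : ℝ) + 1) from
    h.trans (sub_le_self _ (by positivity))
  induction n with
  | zero => simp
  | succ n ih =>
    have hterm : 1 / (2 * (n : ℝ) + 1) ^ 2 ≤ 2 / (2 * n + 1) - 2 / (2 * (n + 1) + 1) := by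
      rw [div_sub_div _ _ (by positivity) (by positivity),
        div_le_div_iff₀ (by positivity) (by positivity)]
      nlinarith [(Nat.cast_nonneg n : (0 : ℝ) ≤ n)]
    rw [Finset.sum_range_succ, Nat.cast_succ]
    linarith

section Diagonal

variable {W d : ℕ}

theorem one_div_two_mul_oddFreq (L k : ℕ) :
    1 / (2 * oddFreq L k) = L / (2 * Real.pi) * (2 / (2 * k + 1)) := by
  rw [oddFreq]
  field_simp

theorem rectKernel_diag {L : ℕ} (hd : 0 < d) (hdW : d < W) (hL : 0 < L) :
    rectKernel W d L (d, 0) = 2 * Real.pi / L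
      * ∑ k ∈ Finset.range L, resolventKernel (dispersion (oddFreq L k)) W d d := by
  rw [rectKernel, if_pos (mem_openRect.2 (by simp; lia)), rectSeries_diag]

theorem sum_range_resolventKernel_self_le {m L : ℕ} (hd : 0 < d) (hdW : d < W) (hmL : m ≤ L) :
    ∑ k ∈ Finset.range m, resolventKernel (dispersion (oddFreq L k)) W d d ≤ m * d := by
  have hdW₀ : (d : ℝ) < W := by exact_mod_cast hdW
  refine (Finset.sum_le_card_nsmul _ _ (d : ℝ) fun k hk => ?_).trans_eq (by simp)
  have hk := (Finset.mem_range.1 hk).trans_le hmL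
  exact resolventKernel_self_le_pole (dispersion_pos (oddFreq_pos hk) (oddFreq_lt_pi hk)) hd hdW₀

theorem sum_Ico_resolventKernel_self_le {m L : ℕ} (hd : 0 < d) (hdW : d < W) (hm : 0 < m)
    (hmL : m ≤ L) :
    ∑ k ∈ Finset.Ico m L, resolventKernel (dispersion (oddFreq L k)) W d d
      ≤ L / (2 * Real.pi) * Real.log (L / m) + L / 2 := by
  have hd₀ : (0 : ℝ) < d := by exact_mod_cast hd
  have hdW₀ : (d : ℝ) < W := by exact_mod_cast hdW
  calc ∑ k ∈ Finset.Ico m L, resolventKernel (dispersion (oddFreq L k)) W d d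
      ≤ ∑ k ∈ Finset.Ico m L, (L / (2 * Real.pi) * (2 / (2 * k + 1)) + 1 / 2) :=
        Finset.sum_le_sum fun k hk => by
          have hk := (Finset.mem_Ico.1 hk).2
          rw [← one_div_two_mul_oddFreq]
          exact (resolventKernel_self_le_inv
            (dispersion_pos (oddFreq_pos hk) (oddFreq_lt_pi hk)) hd₀ hdW₀).trans
            (inv_two_mul_sinh_dispersion_le (oddFreq_pos hk) (oddFreq_lt_pi hk))
    _ ≤ L / (2 * Real.pi) * Real.log (L / m) + L / 2 := by
        rw [Finset.sum_add_distrib, ← Finset.mul_sum, Finset.sum_const, Nat.card_Ico,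
          nsmul_eq_mul, mul_one_div]
        gcongr
        · exact sum_Ico_two_div_odd_le_log hm hmL
        · exact Nat.sub_le _ _

theorem rectKernel_diag_le {m : ℕ} (hd : 0 < d) (hdW : d < W) (hm : 0 < m) :
    rectKernel W d (d * m) (d, 0) ≤ Real.log d + 3 * Real.pi := by
  have : (0 : ℝ) < d := by exact_mod_cast hd
  have hm₀ : (0 : ℝ) < m := by exact_mod_cast hm
  have hmL : m ≤ d * m := Nat.le_mul_of_pos_left m hd
  -- The `m` frequencies below `π / d` contribute at most `d` each; beyond them the coefficients
  -- `1 / (2 * t)` add up to the logarithm of `d * m / m`.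
  have hlow := sum_range_resolventKernel_self_le hd hdW hmL
  have hhigh := sum_Ico_resolventKernel_self_le hd hdW hm hmL
  rw [rectKernel_diag hd hdW (Nat.mul_pos hd hm), ← Finset.sum_range_add_sum_Ico _ hmL]
  refine (mul_le_mul_of_nonneg_left (add_le_add hlow hhigh) (by positivity)).trans_eq ?_
  rw [Nat.cast_mul, mul_div_cancel_right₀ _ hm₀.ne']
  field_simp
  ring

theorem le_resolventKernel_midpoint {t : ℝ} (h0 : 0 < t) (h1 : t < Real.pi) {n : ℕ} (hn : 0 < n) :
    1 / (2 * t) - 1 / 8 - Real.pi ^ 2 / (8 * n) * (1 / t ^ 2)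
      ≤ resolventKernel (dispersion t) (2 * n) n n := by
  have hn₀ : (0 : ℝ) < n := by exact_mod_cast hn
  have hθ := dispersion_pos h0 h1
  set θ := dispersion t
  have hsinh : 2 * t / Real.pi ≤ Real.sinh θ := by
    refine le_trans ?_ (two_mul_sin_half_le_sinh_dispersion h0 h1)
    have := Real.mul_le_sin (x := t / 2) (by linarith) (by linarith)
    rw [mul_div_right_comm]
    linarith
  have hs : 0 < Real.sinh θ := Real.sinh_pos_iff.2 hθ
  have htanh : 1 - Real.tanh (θ * n) ≤ 1 / (n * Real.sinh θ) :=
    (one_sub_tanh_le_inv_sinh (mul_pos hθ hn₀)).trans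
      (one_div_le_one_div_of_le (mul_pos hn₀ hs) (nat_mul_sinh_le_sinh_mul hθ.le n))
  have hcorr : 1 / (2 * Real.sinh θ) * (1 - Real.tanh (θ * n))
      ≤ Real.pi ^ 2 / (8 * n) * (1 / t ^ 2) := by
    calc 1 / (2 * Real.sinh θ) * (1 - Real.tanh (θ * n))
        ≤ 1 / (2 * Real.sinh θ) * (1 / (n * Real.sinh θ)) := by gcongr
      _ = 1 / (2 * n * Real.sinh θ ^ 2) := by field_simp
      _ ≤ 1 / (2 * n * (2 * t / Real.pi) ^ 2) := by gcongr
      _ = _ := by field_simp; norm_num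
  rw [resolventKernel_midpoint hθ hn₀]
  linarith [le_inv_two_mul_sinh_dispersion h0 h1]

theorem le_rectKernel_diag {n : ℕ} (hn : 0 < n) :
    Real.log n - 3 * Real.pi ≤ rectKernel (2 * n) n n (n, 0) := by
  have hn₀ : (0 : ℝ) < n := by exact_mod_cast hn
  have hsq : ∀ k : ℕ, Real.pi ^ 2 / (8 * n) * (1 / oddFreq n k ^ 2)
      = n / 2 * (1 / (2 * k + 1) ^ 2) := fun k => by
    rw [oddFreq]
    field_simp
    norm_num
  have hterm : ∀ k ∈ Finset.range n,
      n / (2 * Real.pi) * (2 / (2 * k + 1)) - 1 / 8 - n / 2 * (1 / (2 * k + 1) ^ 2)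
        ≤ resolventKernel (dispersion (oddFreq n k)) (2 * n : ℕ) n n := fun k hk => by
    have hk := Finset.mem_range.1 hk
    rw [← one_div_two_mul_oddFreq, ← hsq, Nat.cast_mul, Nat.cast_two]
    exact le_resolventKernel_midpoint (oddFreq_pos hk) (oddFreq_lt_pi hk) hn
  have hlog : Real.log n ≤ ∑ k ∈ Finset.range n, 2 / (2 * (k : ℝ) + 1) :=
    (Real.log_le_log hn₀ (by linarith)).trans (log_le_sum_range_two_div_odd n)
  rw [rectKernel_diag hn (by lia) hn]
  calc Real.log n - 3 * Real.pi
      ≤ 2 * Real.pi / n * (n / (2 * Real.pi) * Real.log n - n * (1 / 8) - n / 2 * 2) := by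
        rw [← sub_nonneg]
        field_simp
        ring_nf
        positivity
    _ ≤ 2 * Real.pi / n * ∑ k ∈ Finset.range n,
          (n / (2 * Real.pi) * (2 / (2 * k + 1)) - 1 / 8 - n / 2 * (1 / (2 * k + 1) ^ 2)) := by
        rw [Finset.sum_sub_distrib, Finset.sum_sub_distrib, ← Finset.mul_sum, ← Finset.mul_sum,
          Finset.sum_const, Finset.card_range, nsmul_eq_mul]
        gcongr
        exact sum_range_inv_odd_sq_le n
    _ ≤ _ := by gcongr with k hk; exact hterm k hk

end Diagonal

/-- A bijection of `ℤ²` that carries nearest neighbours to nearest neighbours, expressed through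
the neighbour sum of functions. -/
def IsLatticeSymmetry (e : Vtx ≃ Vtx) : Prop := ∀ f x, nbrSum (f ∘ e) x = nbrSum f (e x)

namespace IsLatticeSymmetry

variable {e e' : Vtx ≃ Vtx}

theorem trans (he : IsLatticeSymmetry e) (he' : IsLatticeSymmetry e') :
    IsLatticeSymmetry (e.trans e') := fun f x => (he (f ∘ e') x).trans (he' f (e x))

theorem negLaplacian_comp (he : IsLatticeSymmetry e) (f : Vtx → ℝ) (x : Vtx) :
    negLaplacian (f ∘ e) x = negLaplacian f (e x) := by
  rw [negLaplacian_apply, negLaplacian_apply, he, Function.comp_apply]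

end IsLatticeSymmetry

theorem isLatticeSymmetry_addRight (c : Vtx) : IsLatticeSymmetry (Equiv.addRight c) :=
  fun f x => by simp [nbrSum_apply, add_right_comm]

theorem isLatticeSymmetry_subLeft (c : Vtx) : IsLatticeSymmetry (Equiv.subLeft c) := fun f x => by
  rw [nbrSum_apply, nbrSum_apply]
  exact Finset.sum_nbij' (- ·) (- ·) (by decide) (by decide) (fun s _ => neg_neg s)
    (fun s _ => neg_neg s) fun s _ =>
      congrArg f (by simp only [Equiv.subLeft_apply]; abel)

theorem isLatticeSymmetry_prodComm : IsLatticeSymmetry (Equiv.prodComm ℤ ℤ) := fun f x => by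
  simp only [nbrSum_eq, Function.comp_apply, Equiv.prodComm_apply, Prod.swap]
  ring

namespace IsGreenKernel

variable {S T : Finset Vtx} {v : Vtx} {g h : Vtx → ℝ} {e : Vtx ≃ Vtx}

theorem comp (hh : IsGreenKernel T (e v) h) (he : IsLatticeSymmetry e) :
    IsGreenKernel (T.preimage e e.injective.injOn) v (h ∘ e) where
  eq_zero_of_notMem x hx := hh.eq_zero_of_notMem _ fun hT => hx (Finset.mem_preimage.2 hT)
  negLaplacian_eq x hx := by
    rw [he.negLaplacian_comp, hh.negLaplacian_eq _ (Finset.mem_preimage.1 hx)]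
    simp [Pi.single_apply]

theorem le_comp (hg : IsGreenKernel S v g) (hh : IsGreenKernel T (e v) h)
    (he : IsLatticeSymmetry e) (hST : ∀ x ∈ S, e x ∈ T) (x : Vtx) : g x ≤ h (e x) :=
  hg.mono (hh.comp he) (fun y hy => Finset.mem_preimage.2 (hST y hy)) x

theorem diag_le_log_of_fst_pos (hg : IsGreenKernel S v g) (hv : v ∈ S)
    (hS : ∀ x ∈ S, 0 < x.1) : g v ≤ Real.log v.1 + 3 * Real.pi := by
  obtain ⟨d, hd⟩ := Int.eq_ofNat_of_zero_le (hS v hv).le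
  have hd₀ : 0 < d := by have := hS v hv; lia
  obtain ⟨R, hR⟩ : ∃ R : ℕ, ∀ x ∈ S, x.1.natAbs + (x.2 - v.2).natAbs < R :=
    ⟨S.sup (fun x => x.1.natAbs + (x.2 - v.2).natAbs) + 1, fun x hx =>
      Nat.lt_succ_of_le (Finset.le_sup (f := fun x : Vtx => x.1.natAbs + (x.2 - v.2).natAbs) hx)⟩
  have hdR : d < R := by have := hR v hv; lia
  have hRL : R ≤ d * R := Nat.le_mul_of_pos_left R hd₀
  have hpole : Equiv.addRight ((0, -v.2) : Vtx) v = ((d : ℤ), 0) := by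
    ext <;> simp [hd]
  have hrect : IsGreenKernel (openRect R (d * R)) (Equiv.addRight ((0, -v.2) : Vtx) v)
      (rectKernel R d (d * R)) := hpole ▸ isGreenKernel_rectKernel hdR.le
  have hle := hg.le_comp hrect (isLatticeSymmetry_addRight _) (fun x hx => mem_openRect.2 ?_) v
  · rw [hpole] at hle
    rw [hd, Int.cast_natCast]
    exact hle.trans (rectKernel_diag_le hd₀ hdR (hd₀.trans hdR))
  · have := hR x hx
    have := hS x hx
    simp only [Equiv.coe_addRight, Prod.fst_add, Prod.snd_add]
    lia

theorem diag_le_log (hg : IsGreenKernel S v g) (hv : v ∈ S) (he : IsLatticeSymmetry e)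
    (hS : ∀ x ∈ S, 0 < (e x).1) : g v ≤ Real.log (e v).1 + 3 * Real.pi := by
  have hcomp := greenKernel_spec (S.map e.toEmbedding) (e v)
  refine (hg.le_comp hcomp he (fun x hx => Finset.mem_map_of_mem _ hx) v).trans
    (hcomp.diag_le_log_of_fst_pos (Finset.mem_map_of_mem _ hv) fun y hy => ?_)
  obtain ⟨x, hx, rfl⟩ := Finset.mem_map.1 hy
  exact hS x hx

theorem log_le_diag {n : ℕ} (hg : IsGreenKernel S v g) (hn : 0 < n)
    (hS : ∀ x : Vtx, |x.1 - v.1| < n → |x.2 - v.2| < n → x ∈ S) :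
    Real.log n - 3 * Real.pi ≤ g v := by
  let e := Equiv.addRight (v - ((n : ℤ), 0))
  have hpole : e ((n : ℤ), 0) = v := add_sub_cancel _ _
  have hle := (isGreenKernel_rectKernel (W := 2 * n) (L := n) (by lia : n ≤ 2 * n)).le_comp
    (e := e) (hpole.symm ▸ hg) (isLatticeSymmetry_addRight _) (fun x hx => ?_) ((n : ℤ), 0)
  · rw [hpole] at hle
    exact (le_rectKernel_diag hn).trans hle
  · obtain ⟨⟨h0, hW⟩, hlo, hhi⟩ := mem_openRect.1 hx
    apply hS <;> simp [e, abs_lt] <;> lia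

end IsGreenKernel

section Neighbourhoods

variable {N : ℕ} {lam : ℝ} {v w : Vtx}

theorem mem_intr {B : Finset Vtx} : w ∈ intr B ↔ w ∈ B ∧ (w.1 + 1, w.2) ∈ B ∧
    (w.1 - 1, w.2) ∈ B ∧ (w.1, w.2 + 1) ∈ B ∧ (w.1, w.2 - 1) ∈ B := by
  rw [intr, bdry, Finset.mem_sdiff, Finset.mem_filter]
  tauto

theorem intr_mono {A B : Finset Vtx} (h : A ⊆ B) : intr A ⊆ intr B := fun w hw => by
  rw [mem_intr] at hw ⊢
  exact ⟨h hw.1, h hw.2.1, h hw.2.2.1, h hw.2.2.2.1, h hw.2.2.2.2⟩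

theorem mem_VN : w ∈ VN N ↔ (0 ≤ w.1 ∧ w.1 ≤ N) ∧ 0 ≤ w.2 ∧ w.2 ≤ N := by
  rw [VN, Finset.mem_Icc, Prod.le_def, Prod.le_def]
  tauto

theorem mem_intr_VN : w ∈ intr (VN N) ↔ (0 < w.1 ∧ w.1 < N) ∧ 0 < w.2 ∧ w.2 < N := by
  simp only [mem_intr, mem_VN]
  omega

/-- Half of the side length of the neighbourhood `[v]_λ`. -/
def nbhdRadius (N : ℕ) (lam : ℝ) : ℝ := (N : ℝ) ^ (1 - lam) / 2

theorem nbhdRadius_nonneg (N : ℕ) (lam : ℝ) : 0 ≤ nbhdRadius N lam := by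
  unfold nbhdRadius
  positivity

theorem nbhdRadius_antitone (hN : 1 ≤ N) : Antitone (nbhdRadius N) := fun a b hab => by
  have : (1 : ℝ) ≤ N := by exact_mod_cast hN
  unfold nbhdRadius
  gcongr

theorem log_nbhdRadius (hN : 1 ≤ N) (lam : ℝ) :
    Real.log (nbhdRadius N lam) = (1 - lam) * Real.log N - Real.log 2 := by
  have hN₀ : (0 : ℝ) < N := by exact_mod_cast hN
  rw [nbhdRadius, Real.log_div (Real.rpow_pos_of_pos hN₀ _).ne' two_ne_zero, Real.log_rpow hN₀]

theorem nbhd_subset_VN (hv : v ∈ VN N) : nbhd N lam v ⊆ VN N := by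
  unfold nbhd
  split_ifs
  · exact subset_rfl
  · exact Finset.singleton_subset_iff.2 hv
  · exact Finset.filter_subset _ _

theorem abs_sub_le_of_mem_nbhd (hlam : lam ≠ 0) (hw : w ∈ nbhd N lam v) :
    |(w.1 : ℝ) - v.1| ≤ nbhdRadius N lam ∧ |(w.2 : ℝ) - v.2| ≤ nbhdRadius N lam := by
  rw [nbhd, if_neg hlam] at hw
  split_ifs at hw
  · obtain rfl := Finset.mem_singleton.1 hw
    simp [nbhdRadius_nonneg]
  · exact (Finset.mem_filter.1 hw).2

theorem mem_nbhd_of_abs_sub_le (hlam : lam ≠ 1) (hw : w ∈ VN N)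
    (h1 : |(w.1 : ℝ) - v.1| ≤ nbhdRadius N lam) (h2 : |(w.2 : ℝ) - v.2| ≤ nbhdRadius N lam) :
    w ∈ nbhd N lam v := by
  rw [nbhd, if_neg hlam]
  split_ifs
  · exact hw
  · exact Finset.mem_filter.2 ⟨hw, h1, h2⟩

theorem nbhd_antitone (hN : 1 ≤ N) (hv : v ∈ VN N) :
    AntitoneOn (fun lam => nbhd N lam v) (Set.Icc 0 1) := fun a ha b hb hab => by
  rcases eq_or_ne a 1 with rfl | ha1
  · rw [le_antisymm hb.2 hab]
  rcases eq_or_ne b 0 with rfl | hb0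
  · rw [le_antisymm hab ha.1]
  intro w hw
  obtain ⟨h1, h2⟩ := abs_sub_le_of_mem_nbhd hb0 hw
  have hr := nbhdRadius_antitone hN hab
  exact mem_nbhd_of_abs_sub_le ha1 (nbhd_subset_VN hv hw) (h1.trans hr) (h2.trans hr)

end Neighbourhoods

/-- The conditional variance of the Gaussian free field at `v` given its values outside the
interior of `[v]_λ`. -/
def residualVariance (N : ℕ) (v : Vtx) (lam : ℝ) : ℝ := greenKernel (intr (nbhd N lam v)) v v

/-- The `ℓ^∞` distance from `v` to the boundary of `V_N`, negative outside of `V_N`. -/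
def boundaryDist (N : ℕ) (v : Vtx) : ℤ := min (min v.1 (N - v.1)) (min v.2 (N - v.2))

section ResidualVariance

variable {N : ℕ} {lam : ℝ} {v : Vtx}

theorem boundaryDist_pos_iff : 0 < boundaryDist N v ↔ v ∈ intr (VN N) := by
  simp [boundaryDist, mem_intr_VN, and_assoc]

theorem residualVariance_nonneg (N : ℕ) (v : Vtx) (lam : ℝ) : 0 ≤ residualVariance N v lam :=
  (greenKernel_spec _ v).nonneg v

theorem residualVariance_eq_zero (hv : v ∉ intr (nbhd N lam v)) : residualVariance N v lam = 0 :=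
  congrFun ((greenKernel_spec _ v).eq_zero hv) v

theorem residualVariance_le_log_boundaryDist (hv : v ∈ intr (nbhd N lam v)) (hvN : v ∈ VN N) :
    residualVariance N v lam ≤ Real.log (boundaryDist N v) + 3 * Real.pi := by
  have hsub : ∀ x ∈ intr (nbhd N lam v), (0 < x.1 ∧ x.1 < N) ∧ 0 < x.2 ∧ x.2 < N :=
    fun x hx => mem_intr_VN.1 (intr_mono (nbhd_subset_VN hvN) hx)
  have hg := greenKernel_spec (intr (nbhd N lam v)) v
  have hreflect := isLatticeSymmetry_subLeft ((N : ℤ), (N : ℤ))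
  rw [boundaryDist]
  rcases min_choice (min v.1 (N - v.1)) (min v.2 (N - v.2)) with h | h <;> rw [h]
  · rcases min_choice v.1 (N - v.1) with h | h <;> rw [h]
    · exact hg.diag_le_log_of_fst_pos hv fun x hx => (hsub x hx).1.1
    · exact hg.diag_le_log hv hreflect fun x hx => sub_pos.2 (hsub x hx).1.2
  · rcases min_choice v.2 (N - v.2) with h | h <;> rw [h]
    · exact hg.diag_le_log hv isLatticeSymmetry_prodComm fun x hx => (hsub x hx).2.1
    · exact hg.diag_le_log hv (isLatticeSymmetry_prodComm.trans hreflect)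
        fun x hx => sub_pos.2 (hsub x hx).2.2

theorem residualVariance_le_log_scale (hN : 1 ≤ N) (hlam : lam ≤ 1) (hv : v ∈ VN N) :
    residualVariance N v lam ≤ (1 - lam) * Real.log N + 3 * Real.pi := by
  have hlogN : 0 ≤ Real.log N := Real.log_natCast_nonneg N
  by_cases hvS : v ∈ intr (nbhd N lam v)
  swap
  · rw [residualVariance_eq_zero hvS]
    have := mul_nonneg (sub_nonneg.2 hlam) hlogN
    positivity
  rcases eq_or_ne lam 0 with rfl | hlam₀
  · refine (residualVariance_le_log_boundaryDist hvS hv).trans ?_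
    have hpos : 0 < boundaryDist N v :=
      boundaryDist_pos_iff.2 (intr_mono (nbhd_subset_VN hv) hvS)
    have hle : boundaryDist N v ≤ N := by
      have := (mem_VN.1 hv).1.2
      rw [boundaryDist]
      lia
    rw [sub_zero, one_mul]
    gcongr
    exact_mod_cast hle
  · have hfloor : ∀ x ∈ intr (nbhd N lam v), 0 < x.1 + (⌊nbhdRadius N lam⌋ - v.1) := fun x hx => by
      have habs := (abs_sub_le_of_mem_nbhd hlam₀ (mem_intr.1 hx).2.2.1).1
      have : v.1 - (x.1 - 1) ≤ ⌊nbhdRadius N lam⌋ := Int.le_floor.2 (by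
        push_cast at habs ⊢
        linarith [neg_le_of_abs_le habs])
      lia
    refine ((greenKernel_spec _ v).diag_le_log hvS
      (isLatticeSymmetry_addRight (⌊nbhdRadius N lam⌋ - v.1, 0)) hfloor).trans ?_
    have hpos : (0 : ℝ) < ⌊nbhdRadius N lam⌋ := by
      have := hfloor v hvS
      exact_mod_cast (by lia : 0 < ⌊nbhdRadius N lam⌋)
    have hlog := Real.log_le_log hpos (Int.floor_le _)
    rw [log_nbhdRadius hN] at hlog
    have hlog2 := Real.log_nonneg one_le_two
    simp only [Equiv.coe_addRight, Prod.fst_add, add_sub_cancel]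
    linarith

theorem log_le_residualVariance {n : ℕ} (hlam : lam ≠ 1) (hn : 0 < n)
    (hdist : n ≤ boundaryDist N v) (hradius : n ≤ nbhdRadius N lam) :
    Real.log n - 3 * Real.pi ≤ residualVariance N v lam := by
  have mem_of_close : ∀ w : Vtx, |w.1 - v.1| ≤ n → |w.2 - v.2| ≤ n → w ∈ nbhd N lam v :=
    fun w h1 h2 => by
      refine mem_nbhd_of_abs_sub_le hlam (mem_VN.2 ?_) (le_trans ?_ hradius) (le_trans ?_ hradius)
      · rw [abs_le] at h1 h2
        rw [boundaryDist] at hdist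
        lia
      · exact_mod_cast h1
      · exact_mod_cast h2
  refine (greenKernel_spec _ v).log_le_diag hn fun x h1 h2 => ?_
  rw [abs_lt] at h1 h2
  refine mem_intr.2 ⟨?_, ?_, ?_, ?_, ?_⟩ <;> apply mem_of_close <;> rw [abs_le] <;> lia

theorem min_log_le_residualVariance (hN : 1 ≤ N) (hv : v ∈ intr (VN N)) :
    min (Real.log (boundaryDist N v)) ((1 - lam) * Real.log N - 2 * Real.log 2) - 3 * Real.pi
      ≤ residualVariance N v lam := by
  have hpi := Real.pi_pos
  have hlog2 := Real.log_nonneg one_le_two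
  have hpos := boundaryDist_pos_iff.2 hv
  obtain ⟨d, hd⟩ := Int.eq_ofNat_of_zero_le hpos.le
  rw [hd, Int.cast_natCast]
  have hlogr := log_nbhdRadius hN lam
  have hr : 0 < nbhdRadius N lam := by
    unfold nbhdRadius
    positivity
  rcases lt_or_ge (nbhdRadius N lam) 1 with hsmall | hlarge
  · have hlogr_neg := Real.log_neg hr hsmall
    have := residualVariance_nonneg N v lam
    have := min_le_right (Real.log d) ((1 - lam) * Real.log N - 2 * Real.log 2)
    linarith
  have hlam : lam ≠ 1 := by
    rintro rfl
    norm_num [nbhdRadius] at hlarge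
  have hn : 0 < ⌊nbhdRadius N lam⌋₊ := Nat.floor_pos.2 hlarge
  rcases le_total d ⌊nbhdRadius N lam⌋₊ with hdn | hnd
  · refine le_trans ?_
      (log_le_residualVariance hlam (by lia) hd.ge ((Nat.le_floor_iff hr.le).1 hdn))
    exact sub_le_sub_right (min_le_left _ _) _
  · refine le_trans ?_ (log_le_residualVariance hlam hn (by lia) (Nat.floor_le hr.le))
    have hfloor : nbhdRadius N lam / 2 ≤ ⌊nbhdRadius N lam⌋₊ := by
      have h1 : (1 : ℝ) ≤ ⌊nbhdRadius N lam⌋₊ := by exact_mod_cast hn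
      linarith [Nat.lt_floor_add_one (nbhdRadius N lam)]
    have hlog := Real.log_le_log (half_pos hr) hfloor
    rw [Real.log_div hr.ne' two_ne_zero, hlogr] at hlog
    refine sub_le_sub_right ((min_le_right _ _).trans ?_) _
    linarith

/-- Close to the boundary of `V_N` both variances are governed by the distance to the boundary
instead of the scale, which only decreases their difference. -/
theorem residualVariance_sub_le {a b : ℝ} (hN : 1 ≤ N) (hv : v ∈ VN N) (hab : a ≤ b) (hb : b ≤ 1) :
    residualVariance N v a - residualVariance N v b
      ≤ (b - a) * Real.log N + (6 * Real.pi + 2) := by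
  have hpi := Real.pi_pos
  have hlog2 : Real.log 2 ≤ 1 := Real.log_two_lt_d9.le.trans (by norm_num)
  have hscale := mul_nonneg (sub_nonneg.2 hab) (Real.log_natCast_nonneg N)
  have hupper := residualVariance_le_log_scale hN (hab.trans hb) hv
  by_cases hva : v ∈ intr (nbhd N a v)
  · have hdist := residualVariance_le_log_boundaryDist hva hv
    have hlower := min_log_le_residualVariance (lam := b) hN (intr_mono (nbhd_subset_VN hv) hva)
    rcases min_choice (Real.log (boundaryDist N v)) ((1 - b) * Real.log N - 2 * Real.log 2)
      with h | h <;> rw [h] at hlower <;> linarith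
  · have := residualVariance_nonneg N v b
    rw [residualVariance_eq_zero hva]
    linarith

end ResidualVariance

section GreenForm

variable {B : Finset Vtx} {G : Vtx → Vtx → ℝ}

/-- The bilinear form with matrix `G` on functions on `B`. If `G` is the covariance of a field on
`B`, it gives the covariances of linear combinations of the field. -/
def greenForm (B : Finset Vtx) (G : Vtx → Vtx → ℝ) : LinearMap.BilinForm ℝ (Vtx → ℝ) :=
  ∑ v ∈ B, ∑ w ∈ B, G v w • LinearMap.BilinForm.linMulLin (LinearMap.proj v) (LinearMap.proj w)

theorem greenForm_apply (c d : Vtx → ℝ) :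
    greenForm B G c d = ∑ v ∈ B, ∑ w ∈ B, c v * d w * G v w := by
  simp only [greenForm, LinearMap.sum_apply, LinearMap.smul_apply,
    LinearMap.BilinForm.linMulLin_apply, LinearMap.proj_apply, smul_eq_mul, mul_comm (G _ _)]

theorem intr_subset (B : Finset Vtx) : intr B ⊆ B := Finset.sdiff_subset

theorem support_finite_of_eq_zero {S : Finset Vtx} {g : Vtx → ℝ} (hout : ∀ x ∉ S, g x = 0) :
    g.support.Finite :=
  S.finite_toSet.subset fun x hx => by_contra fun hxS => hx (hout x hxS)

theorem isGreenKernel_of_isGreenFn (hG : IsGreenFn B G) {w : Vtx} (hw : w ∈ intr B) :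
    IsGreenKernel (intr B) w (G · w) where
  eq_zero_of_notMem x hx := hG.1 x w (Or.inl hx)
  negLaplacian_eq x hx := by
    rw [negLaplacian_eq_iff, nbrSum_eq, Pi.single_apply]
    exact hG.2 w hw x hx

theorem sum_mul_greenFn {c g : Vtx → ℝ} (hG : IsGreenFn B G) (hout : ∀ x ∉ intr B, g x = 0)
    (hg : ∀ x ∈ intr B, negLaplacian g x = c x) (w : Vtx) : ∑ v ∈ B, c v * G v w = g w := by
  by_cases hw : w ∈ intr B
  · have hker := isGreenKernel_of_isGreenFn hG hw
    have hzero : ∀ x ∉ intr B, G x w = 0 := hker.eq_zero_of_notMem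
    calc ∑ v ∈ B, c v * G v w
        = ∑ v ∈ intr B, negLaplacian g v * G v w := by
          rw [← Finset.sum_subset (intr_subset B) fun x _ hx => by rw [hzero x hx, mul_zero]]
          exact Finset.sum_congr rfl fun x hx => by rw [hg x hx]
      _ = ∑' v, g v * negLaplacian (G · w) v := by
          rw [← tsum_negLaplacian_mul (support_finite_of_eq_zero hout)
            (support_finite_of_eq_zero hzero)]
          exact (tsum_eq_sum fun x hx => by rw [hzero x hx, mul_zero]).symm
      _ = g w := by
          rw [tsum_eq_sum fun x (hx : x ∉ intr B) => by rw [hout x hx, zero_mul],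
            Finset.sum_congr rfl fun x hx => by rw [hker.negLaplacian_eq x hx]]
          simp [Pi.single_apply, hw]
  · simp [hG.1 _ w (Or.inr hw), hout w hw]

theorem greenForm_eq_sum {c g : Vtx → ℝ} (hG : IsGreenFn B G) (hout : ∀ x ∉ intr B, g x = 0)
    (hg : ∀ x ∈ intr B, negLaplacian g x = c x) (d : Vtx → ℝ) :
    greenForm B G c d = ∑ w ∈ B, d w * g w := by
  rw [greenForm_apply, Finset.sum_comm]
  refine Finset.sum_congr rfl fun w _ => ?_
  rw [← sum_mul_greenFn hG hout hg w, Finset.mul_sum]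
  exact Finset.sum_congr rfl fun v _ => by ring

theorem greenForm_eq_tsum {c d g h : Vtx → ℝ} (hG : IsGreenFn B G)
    (hg_out : ∀ x ∉ intr B, g x = 0) (hg : ∀ x ∈ intr B, negLaplacian g x = c x)
    (hh : ∀ x ∈ intr B, negLaplacian h x = d x) :
    greenForm B G c d = ∑' w, g w * negLaplacian h w := by
  rw [greenForm_eq_sum hG hg_out hg,
    tsum_eq_sum fun x (hx : x ∉ intr B) => by rw [hg_out x hx, zero_mul],
    ← Finset.sum_subset (intr_subset B) fun x _ hx => by rw [hg_out x hx, mul_zero]]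
  exact Finset.sum_congr rfl fun x hx => by rw [hh x hx, mul_comm]

theorem greenForm_comm (hG : IsGreenFn B G) (c d : Vtx → ℝ) :
    greenForm B G c d = greenForm B G d c := by
  obtain ⟨g, hg_out, hg⟩ := exists_negLaplacian_eq (intr B) c
  obtain ⟨h, hh_out, hh⟩ := exists_negLaplacian_eq (intr B) d
  rw [greenForm_eq_tsum hG hg_out hg hh, greenForm_eq_tsum hG hh_out hh hg,
    ← tsum_negLaplacian_mul (support_finite_of_eq_zero hg_out) (support_finite_of_eq_zero hh_out)]
  simp only [mul_comm]

theorem greenForm_self_nonneg (hG : IsGreenFn B G) (c : Vtx → ℝ) : 0 ≤ greenForm B G c c := by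
  obtain ⟨g, hg_out, hg⟩ := exists_negLaplacian_eq (intr B) c
  rw [greenForm_eq_tsum hG hg_out hg hg]
  exact tsum_mul_negLaplacian_self_nonneg (support_finite_of_eq_zero hg_out)

end GreenForm

section PoissonKernel

variable {B S T : Finset Vtx} {G : Vtx → Vtx → ℝ} {v : Vtx}

/-- The Poisson kernel of `S` at `v`: the function `x ↦ poissonKernel S v x` is the distribution of
the point where simple random walk from `v` leaves `S`. It is encoded through the Green function,
whose negative Laplacian is the unit mass at `v` minus the exit distribution. -/
def poissonKernel (S : Finset Vtx) (v : Vtx) : Vtx → ℝ :=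
  Pi.single v 1 - negLaplacian (greenKernel S v)

theorem poissonKernel_eq_zero {x : Vtx} (hx : x ∈ S) : poissonKernel S v x = 0 := by
  rw [poissonKernel, Pi.sub_apply, (greenKernel_spec S v).negLaplacian_eq x hx, sub_self]

theorem greenForm_poissonKernel_left (hG : IsGreenFn B G) (hS : S ⊆ intr B) (d : Vtx → ℝ) :
    greenForm B G (poissonKernel S v) d
      = greenForm B G (Pi.single v 1) d - ∑ w ∈ B, d w * greenKernel S v w := by
  rw [poissonKernel, map_sub, LinearMap.sub_apply, greenForm_eq_sum hG
    (fun x hx => (greenKernel_spec S v).eq_zero_of_notMem x fun hxS => hx (hS hxS)) fun _ _ => rfl]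

theorem greenForm_single_sub_poissonKernel (hG : IsGreenFn B G) (hS : S ⊆ intr B) {w : Vtx}
    (hw : w ∉ S) :
    greenForm B G (Pi.single v 1 - poissonKernel S v) (Pi.single w 1) = 0 := by
  rw [map_sub, LinearMap.sub_apply, greenForm_poissonKernel_left hG hS]
  simp [Pi.single_apply, (greenKernel_spec S v).eq_zero_of_notMem w hw]

theorem sum_single_mul_greenKernel (hS : S ⊆ B) :
    ∑ w ∈ B, (Pi.single v 1 : Vtx → ℝ) w * greenKernel S v w = greenKernel S v v := by
  simp only [Pi.single_apply, ite_mul, one_mul, zero_mul, Finset.sum_ite_eq']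
  exact ite_eq_left_iff.2 fun hv =>
    ((greenKernel_spec S v).eq_zero_of_notMem v fun hvS => hv (hS hvS)).symm

theorem sum_negLaplacian_greenKernel_mul (hST : S ⊆ T) (hT : T ⊆ B) :
    ∑ w ∈ B, negLaplacian (greenKernel S v) w * greenKernel T v w = greenKernel S v v := by
  have hS := greenKernel_spec S v
  have hT' := greenKernel_spec T v
  calc ∑ w ∈ B, negLaplacian (greenKernel S v) w * greenKernel T v w
      = ∑' w, greenKernel S v w * negLaplacian (greenKernel T v) w := by
        rw [← tsum_negLaplacian_mul (support_finite_of_eq_zero hS.eq_zero_of_notMem)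
          (support_finite_of_eq_zero hT'.eq_zero_of_notMem)]
        refine (tsum_eq_sum fun x hx => ?_).symm
        rw [hT'.eq_zero_of_notMem x fun hxT => hx (hT hxT), mul_zero]
    _ = ∑ w ∈ S, (Pi.single v 1 : Vtx → ℝ) w * greenKernel S v w := by
        rw [tsum_eq_sum fun x (hx : x ∉ S) => by rw [hS.eq_zero_of_notMem x hx, zero_mul]]
        exact Finset.sum_congr rfl fun x hx => by rw [hT'.negLaplacian_eq x (hST hx), mul_comm]
    _ = greenKernel S v v := sum_single_mul_greenKernel subset_rfl

/-- Harmonic averages over nested domains are a martingale, so their covariance is the variance of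
the coarser one. -/
theorem greenForm_poissonKernel_poissonKernel (hG : IsGreenFn B G) (hST : S ⊆ T)
    (hT : T ⊆ intr B) :
    greenForm B G (poissonKernel T v) (poissonKernel S v)
      = greenForm B G (Pi.single v 1) (Pi.single v 1) - greenKernel T v v := by
  have hTB := hT.trans (intr_subset B)
  rw [greenForm_poissonKernel_left hG hT, greenForm_comm hG (Pi.single v 1),
    greenForm_poissonKernel_left hG (hST.trans hT), sum_single_mul_greenKernel (hST.trans hTB)]
  simp only [poissonKernel, Pi.sub_apply, sub_mul]
  rw [Finset.sum_sub_distrib, sum_single_mul_greenKernel hTB,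
    sum_negLaplacian_greenKernel_mul hST hTB]
  ring

end PoissonKernel

section GaussianField

open MeasureTheory ProbabilityTheory

/-- The σ-algebra generated by the field on `A`. -/
abbrev fieldAlg (A : Set Vtx) : MeasurableSpace FieldSp :=
  ⨆ w ∈ A, MeasurableSpace.comap (fun ω : FieldSp => ω w) inferInstance

theorem comap_eval_le_fieldAlg {A : Set Vtx} {w : Vtx} (hw : w ∈ A) :
    MeasurableSpace.comap (fun ω : FieldSp => ω w) inferInstance ≤ fieldAlg A :=
  le_biSup (fun w : Vtx => MeasurableSpace.comap (fun ω : FieldSp => ω w) inferInstance) hw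

theorem fieldAlg_mono {A A' : Set Vtx} (h : A ⊆ A') : fieldAlg A ≤ fieldAlg A' :=
  biSup_mono fun _ hw => h hw

theorem fieldAlg_le (A : Set Vtx) : fieldAlg A ≤ MeasurableSpace.pi :=
  iSup₂_le fun w _ => (measurable_pi_apply w).comap_le

theorem fieldAlg_le_comap_restrict (A : Set Vtx) :
    fieldAlg A ≤ MeasurableSpace.comap (fun (ω : FieldSp) (w : A) => ω w) MeasurableSpace.pi :=
  iSup₂_le fun w hw => ((measurable_pi_apply (⟨w, hw⟩ : A)).comp
    (comap_measurable fun (ω : FieldSp) (w : A) => ω w)).comap_le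

variable {B : Finset Vtx}

/-- The linear combination `∑ v ∈ B, c v * ω v` of the field on `B`, as a linear function of the
coefficients. -/
def linComb (B : Finset Vtx) : (Vtx → ℝ) →ₗ[ℝ] FieldSp → ℝ :=
  ∑ v ∈ B, (LinearMap.proj v).smulRight fun ω : FieldSp => ω v

theorem linComb_apply (c : Vtx → ℝ) (ω : FieldSp) : linComb B c ω = ∑ v ∈ B, c v * ω v := by
  simp [linComb]

theorem linComb_single {w : Vtx} (hw : w ∈ B) : linComb B (Pi.single w 1) = fun ω => ω w := by
  funext ω
  simp [linComb_apply, Pi.single_apply, hw]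

theorem measurable_linComb_fieldAlg {A : Set Vtx} {c : Vtx → ℝ} (hc : ∀ w ∈ B, w ∉ A → c w = 0) :
    Measurable[fieldAlg A] (linComb B c) := by
  simp only [funext (linComb_apply c)]
  refine Finset.measurable_fun_sum B fun w hw => ?_
  by_cases hwA : w ∈ A
  · exact ((comap_measurable fun ω : FieldSp => ω w).mono
      (comap_eval_le_fieldAlg hwA) le_rfl).const_mul (c w)
  · simp only [hc w hw hwA, zero_mul]
    exact measurable_const

theorem measurable_linComb (c : Vtx → ℝ) : Measurable (linComb B c) :=
  (measurable_linComb_fieldAlg (A := Set.univ) (by simp)).mono (fieldAlg_le _) le_rfl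

/-- Under `P` the field on `B` is centered Gaussian with covariance the Green function `G` of `B`;
as in the definition of the Gaussian free field, this is tested on linear combinations. -/
structure HasGreenCovariance (B : Finset Vtx) (G : Vtx → Vtx → ℝ) (P : Measure FieldSp) : Prop where
  isGreenFn : IsGreenFn B G
  hasLaw_linComb : ∀ c, HasLaw (linComb B c) (gaussianReal 0 (greenForm B G c c).toNNReal) P

theorem exists_hasGreenCovariance {N : ℕ} {P : Measure FieldSp} (hP : IsGFF N P) :
    ∃ G, HasGreenCovariance (VN N) G P := by
  obtain ⟨-, G, hG, hlaw⟩ := hP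
  refine ⟨G, hG, fun c => ⟨(measurable_linComb c).aemeasurable, ?_⟩⟩
  rw [greenForm_apply, ← hlaw, funext (linComb_apply c)]

namespace HasGreenCovariance

variable {G : Vtx → Vtx → ℝ} {P : Measure FieldSp} (h : HasGreenCovariance B G P)
include h

theorem isProbabilityMeasure : IsProbabilityMeasure P := (h.hasLaw_linComb 0).isProbabilityMeasure

theorem memLp_linComb (c : Vtx → ℝ) : MemLp (linComb B c) 2 P :=
  (h.hasLaw_linComb c).hasGaussianLaw.memLp_two

theorem integral_linComb (c : Vtx → ℝ) : P[linComb B c] = 0 := by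
  rw [(h.hasLaw_linComb c).integral_eq, integral_id_gaussianReal]

theorem variance_linComb (c : Vtx → ℝ) : Var[linComb B c; P] = greenForm B G c c := by
  rw [(h.hasLaw_linComb c).variance_eq, variance_id_gaussianReal,
    Real.coe_toNNReal _ (greenForm_self_nonneg h.isGreenFn c)]

theorem integral_linComb_sq (c : Vtx → ℝ) : ∫ ω, linComb B c ω ^ 2 ∂P = greenForm B G c c := by
  rw [← h.variance_linComb, variance_of_integral_eq_zero
    (measurable_linComb c).aemeasurable (h.integral_linComb c)]

theorem covariance_linComb (c d : Vtx → ℝ) :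
    cov[linComb B c, linComb B d; P] = greenForm B G c d := by
  have := h.isProbabilityMeasure
  have hadd := variance_add (h.memLp_linComb c) (h.memLp_linComb d)
  rw [← map_add, h.variance_linComb, h.variance_linComb, h.variance_linComb,
    LinearMap.BilinForm.add_left, LinearMap.BilinForm.add_right, LinearMap.BilinForm.add_right,
    greenForm_comm h.isGreenFn d c] at hadd
  linarith

theorem isGaussianProcess_linComb : IsGaussianProcess (linComb B) P where
  hasGaussianLaw I := by
    refine ⟨isGaussian_of_map_eq_gaussianReal fun L => ?_⟩
    let c : Vtx → ℝ := ∑ i : I, L (fun j => if i = j then 1 else 0) • (i : Vtx → ℝ)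
    have hL : ∀ ω, L (fun i => linComb B i ω) = linComb B c ω := fun ω => by
      rw [← ContinuousLinearMap.coe_coe, LinearMap.pi_apply_eq_sum_univ]
      simp only [c, map_sum, map_smul, Finset.sum_apply, Pi.smul_apply, smul_eq_mul,
        ContinuousLinearMap.coe_coe, mul_comm]
    refine ⟨0, (greenForm B G c c).toNNReal, ?_⟩
    rw [← (h.hasLaw_linComb c).map_eq, ← funext hL]
    exact Measure.map_map L.continuous.measurable
      (measurable_pi_lambda _ fun i => measurable_linComb (i : Vtx → ℝ))

theorem indep_fieldAlg_linComb {A : Set Vtx} (hA : A ⊆ B) {c : Vtx → ℝ}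
    (hc : ∀ w ∈ A, greenForm B G c (Pi.single w 1) = 0) :
    Indep (MeasurableSpace.comap (linComb B c) inferInstance) (fieldAlg A) P := by
  have hXY := h.isGaussianProcess_linComb.comp_right
    (Sum.elim (fun _ : Unit => c) fun w : A => Pi.single (w : Vtx) 1)
  rw [Sum.comp_elim] at hXY
  have hindep := hXY.indepFun_of_covariance_eq_zero
    (fun _ => (measurable_linComb _).aemeasurable) (fun _ => (measurable_linComb _).aemeasurable)
    fun _ w => (h.covariance_linComb _ _).trans (hc w w.2)
  refine indep_of_indep_of_le_left (indep_of_indep_of_le_right hindep ?_) ?_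
  · have heval : ∀ w : A, linComb B (Pi.single (w : Vtx) 1) = fun ω => ω w :=
      fun w => linComb_single (hA w.2)
    simpa only [Function.comp_apply, heval] using fieldAlg_le_comap_restrict A
  · exact ((measurable_pi_apply ()).comp
      (comap_measurable fun (ω : FieldSp) (_ : Unit) => linComb B c ω)).comap_le

theorem condExp_linComb {A : Set Vtx} (hA : A ⊆ B) {c d : Vtx → ℝ} (hd : ∀ w ∈ B, w ∉ A → d w = 0)
    (hcd : ∀ w ∈ A, greenForm B G (c - d) (Pi.single w 1) = 0) :
    P[linComb B c | fieldAlg A] =ᵐ[P] linComb B d := by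
  have := h.isProbabilityMeasure
  have hint : ∀ c, Integrable (linComb B c) P := fun c => (h.memLp_linComb c).integrable one_le_two
  have hknown : P[linComb B d | fieldAlg A] = linComb B d :=
    condExp_of_stronglyMeasurable (fieldAlg_le A)
      (measurable_linComb_fieldAlg hd).stronglyMeasurable (hint d)
  have hindep : P[linComb B (c - d) | fieldAlg A] =ᵐ[P] 0 := by
    have := condExp_indep_eq (measurable_linComb (c - d)).comap_le (fieldAlg_le A)
      (comap_measurable (linComb B (c - d))).stronglyMeasurable (h.indep_fieldAlg_linComb hA hcd)
    rwa [h.integral_linComb] at this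
  have hadd := condExp_add (hint (c - d)) (hint d) (fieldAlg A)
  rw [← map_add, sub_add_cancel, hknown] at hadd
  filter_upwards [hadd, hindep] with ω h₁ h₂
  rw [h₁, Pi.add_apply, h₂, Pi.zero_apply, zero_add]

theorem condExp_eval_eq_poissonKernel {S : Finset Vtx} {v : Vtx} (hS : S ⊆ intr B) (hv : v ∈ B) :
    P[fun ω => ω v | fieldAlg {w | w ∈ B ∧ w ∉ S}] =ᵐ[P] linComb B (poissonKernel S v) := by
  rw [← linComb_single hv]
  exact h.condExp_linComb (fun _ hw => hw.1)
    (fun _ hw hwS => poissonKernel_eq_zero (not_not.1 fun hx => hwS ⟨hw, hx⟩))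
    fun w hw => greenForm_single_sub_poissonKernel h.isGreenFn hS hw.2

end HasGreenCovariance

end GaussianField

section HarmonicAverages

open MeasureTheory

variable {N : ℕ} {v : Vtx} {G : Vtx → Vtx → ℝ} {P : Measure FieldSp} {a b : ℝ}

/-- The coefficients of the harmonic average `φ_v(λ)` as a linear combination of the field. -/
def harmonicWeight (N : ℕ) (v : Vtx) (lam : ℝ) : Vtx → ℝ := poissonKernel (intr (nbhd N lam v)) v

theorem phiScale_ae_eq (h : HasGreenCovariance (VN N) G P) (hv : v ∈ VN N) (lam : ℝ) :
    phiScale N P v lam =ᵐ[P] linComb (VN N) (harmonicWeight N v lam) :=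
  h.condExp_eval_eq_poissonKernel (intr_mono (nbhd_subset_VN hv)) hv

theorem intr_nbhd_subset (hN : 1 ≤ N) (hv : v ∈ VN N) (ha : 0 ≤ a) (hab : a ≤ b) (hb : b ≤ 1) :
    intr (nbhd N b v) ⊆ intr (nbhd N a v) :=
  intr_mono (nbhd_antitone hN hv ⟨ha, hab.trans hb⟩ ⟨ha.trans hab, hb⟩ hab)

theorem scaleAlg_mono (hN : 1 ≤ N) (hv : v ∈ VN N) (ha : 0 ≤ a) (hab : a ≤ b) (hb : b ≤ 1) :
    scaleAlg N a v ≤ scaleAlg N b v :=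
  fieldAlg_mono fun _ hw => ⟨hw.1, fun hwb => hw.2 (intr_nbhd_subset hN hv ha hab hb hwb)⟩

theorem greenForm_harmonicWeight (hG : IsGreenFn (VN N) G) (hN : 1 ≤ N) (hv : v ∈ VN N)
    (ha : 0 ≤ a) (hab : a ≤ b) (hb : b ≤ 1) :
    greenForm (VN N) G (harmonicWeight N v a) (harmonicWeight N v b)
      = greenForm (VN N) G (Pi.single v 1) (Pi.single v 1) - residualVariance N v a :=
  greenForm_poissonKernel_poissonKernel hG (intr_nbhd_subset hN hv ha hab hb)
    (intr_mono (nbhd_subset_VN hv))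

theorem condExp_phiScale [IsFiniteMeasure P] (hN : 1 ≤ N) (hv : v ∈ VN N) (ha : a ∈ Set.Icc 0 1)
    (hb : b ∈ Set.Icc 0 1) :
    P[phiScale N P v a | scaleAlg N b v] =ᵐ[P] phiScale N P v (min a b) := by
  rcases le_total a b with hab | hba
  · rw [min_eq_left hab]
    exact (condExp_of_stronglyMeasurable (fieldAlg_le _)
      (stronglyMeasurable_condExp.mono (scaleAlg_mono hN hv ha.1 hab hb.2))
      integrable_condExp).eventuallyEq
  · rw [min_eq_right hba]
    have hle : scaleAlg N a v ≤ MeasurableSpace.pi := fieldAlg_le _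
    exact condExp_condExp_of_le (scaleAlg_mono hN hv hb.1 hba ha.2) hle

end HarmonicAverages

/-- The condition `hu` is the covariance structure of a martingale, whose increments are
orthogonal. -/
theorem bilin_sum_smul_increments {R E : Type*} [CommRing R] [AddCommGroup E] [Module R E]
    (A : LinearMap.BilinForm R E) (hA : ∀ x y, A x y = A y x) (s V : ℕ → R) (u : ℕ → E) (M : ℕ)
    (hu : ∀ i j, i ≤ j → j ≤ M → A (u i) (u j) = V i) :
    A (∑ i ∈ Finset.range M, s i • (u (i + 1) - u i))
        (∑ i ∈ Finset.range M, s i • (u (i + 1) - u i))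
      = ∑ i ∈ Finset.range M, s i ^ 2 * (V (i + 1) - V i) := by
  have hlt : ∀ i j, i < j → j < M → A (u (i + 1) - u i) (u (j + 1) - u j) = 0 := by
    intro i j hij hj
    simp only [map_sub, LinearMap.sub_apply]
    rw [hu (i + 1) (j + 1) (by lia) hj, hu (i + 1) j hij hj.le, hu i (j + 1) (by lia) hj,
      hu i j hij.le hj.le]
    ring
  have horth : ∀ i j, i < M → j < M → i ≠ j → A (u (i + 1) - u i) (u (j + 1) - u j) = 0 :=
    fun i j hi hj hij => hij.lt_or_gt.elim (hlt i j · hj) fun hji => (hA _ _).trans (hlt j i hji hi)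
  have hdiag : ∀ i < M, A (u (i + 1) - u i) (u (i + 1) - u i) = V (i + 1) - V i := fun i hi => by
    simp only [map_sub, LinearMap.sub_apply]
    rw [hu (i + 1) (i + 1) le_rfl hi, hA (u (i + 1)) (u i), hu i (i + 1) (by lia) hi,
      hu i i le_rfl hi.le]
    ring
  simp only [map_sum, LinearMap.sum_apply, map_smul, LinearMap.smul_apply, smul_eq_mul]
  refine Finset.sum_congr rfl fun i hi => ?_
  rw [Finset.sum_eq_single_of_mem i hi fun j hj hji => by
      rw [horth _ _ (Finset.mem_range.1 hj) (Finset.mem_range.1 hi) hji, mul_zero],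
    hdiag i (Finset.mem_range.1 hi)]
  ring

theorem sum_Icc_one_eq_sum_range {E : Type*} [AddCommMonoid E] (f : ℕ → E) (M : ℕ) :
    ∑ i ∈ Finset.Icc 1 M, f i = ∑ i ∈ Finset.range M, f (i + 1) := by
  rw [Finset.range_eq_Ico, Finset.sum_Ico_add' f 0 M 1]
  rfl

theorem apply_min_sub_apply_min {X E : Type*} [LinearOrder X] [AddGroup E] {α β : X}
    (hαβ : α ≤ β) (f : X → E) (x : X) :
    f (min x β) - f (min x α) = f (Set.projIcc α β hαβ x) - f α := by
  rw [Set.coe_projIcc, min_comm x β]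
  rcases le_total x α with hx | hx
  · rw [min_eq_left hx, min_eq_right (hx.trans hαβ), max_eq_left hx, sub_self, sub_self]
  · rw [min_eq_right hx, max_eq_right (le_min hαβ hx)]

section ScaleField

open MeasureTheory

variable {N M : ℕ} {sigv lamv : ℕ → ℝ} {α β : ℝ} {v : Vtx} {G : Vtx → Vtx → ℝ} {P : Measure FieldSp}

theorem scale_mem_Icc (hmono : MonotoneOn lamv (Set.Iic M)) (hlam₀ : lamv 0 = 0)
    (hlamM : lamv M = 1) {i : ℕ} (hi : i ≤ M) : lamv i ∈ Set.Icc 0 1 :=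
  ⟨hlam₀ ▸ hmono (Nat.zero_le M) hi (Nat.zero_le i), hlamM ▸ hmono hi (le_refl M) hi⟩

theorem psiScale_ae_eq [IsFiniteMeasure P] (hN : 1 ≤ N) (hv : v ∈ VN N)
    (hmono : MonotoneOn lamv (Set.Iic M)) (hlam₀ : lamv 0 = 0) (hlamM : lamv M = 1)
    (hβ : β ∈ Set.Icc 0 1) :
    psiScale N M sigv lamv P v β =ᵐ[P] fun ω => ∑ i ∈ Finset.range M, sigv (i + 1) *
      (phiScale N P v (min (lamv (i + 1)) β) ω - phiScale N P v (min (lamv i) β) ω) := by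
  have hpsi : psiFld N M sigv lamv P v = ∑ i ∈ Finset.range M,
      sigv (i + 1) • (phiScale N P v (lamv (i + 1)) - phiScale N P v (lamv i)) := by
    funext ω
    simp [psiFld, sum_Icc_one_eq_sum_range]
  have hint : ∀ x, Integrable (phiScale N P v x) P := fun x => integrable_condExp
  have hphi : ∀ i ≤ M, P[phiScale N P v (lamv i) | scaleAlg N β v]
      =ᵐ[P] phiScale N P v (min (lamv i) β) := fun i hi =>
    condExp_phiScale hN hv (scale_mem_Icc hmono hlam₀ hlamM hi) hβ
  have hterm : ∀ i < M,
      P[sigv (i + 1) • (phiScale N P v (lamv (i + 1)) - phiScale N P v (lamv i)) | scaleAlg N β v]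
        =ᵐ[P] fun ω => sigv (i + 1) *
          (phiScale N P v (min (lamv (i + 1)) β) ω - phiScale N P v (min (lamv i) β) ω) := by
    intro i hi
    filter_upwards [condExp_smul (sigv (i + 1))
        (phiScale N P v (lamv (i + 1)) - phiScale N P v (lamv i)) (scaleAlg N β v),
      condExp_sub (hint (lamv (i + 1))) (hint (lamv i)) (scaleAlg N β v), hphi _ hi,
      hphi _ hi.le] with ω h₁ h₂ h₃ h₄
    rw [h₁, Pi.smul_apply, h₂, Pi.sub_apply, h₃, h₄, smul_eq_mul]
  rw [psiScale, hpsi]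
  filter_upwards [condExp_finsetSum (fun i _ => ((hint (lamv (i + 1))).sub (hint (lamv i))).smul
    (sigv (i + 1))) (scaleAlg N β v),
    (Finset.range M).eventually_all.2 fun i hi => hterm i (Finset.mem_range.1 hi)] with ω h₁ h₂
  rw [h₁, Finset.sum_apply]
  exact Finset.sum_congr rfl h₂

theorem psiInc_ae_eq (h : HasGreenCovariance (VN N) G P) (hN : 1 ≤ N) (hv : v ∈ VN N)
    (hmono : MonotoneOn lamv (Set.Iic M)) (hlam₀ : lamv 0 = 0) (hlamM : lamv M = 1)
    (hα : 0 ≤ α) (hαβ : α ≤ β) (hβ : β ≤ 1) :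
    psiInc N M sigv lamv P v α β =ᵐ[P] linComb (VN N) (∑ i ∈ Finset.range M, sigv (i + 1) •
      (harmonicWeight N v (Set.projIcc α β hαβ (lamv (i + 1))) -
        harmonicWeight N v (Set.projIcc α β hαβ (lamv i)))) := by
  have := h.isProbabilityMeasure
  have hweights : ∀ᵐ ω ∂P, ∀ i ∈ Finset.range (M + 1),
      phiScale N P v (Set.projIcc α β hαβ (lamv i)) ω
        = linComb (VN N) (harmonicWeight N v (Set.projIcc α β hαβ (lamv i))) ω :=
    (Finset.range (M + 1)).eventually_all.2 fun i _ => phiScale_ae_eq h hv _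
  filter_upwards [psiScale_ae_eq hN hv hmono hlam₀ hlamM ⟨hα, hαβ.trans hβ⟩,
    psiScale_ae_eq hN hv hmono hlam₀ hlamM ⟨hα.trans hαβ, hβ⟩, hweights] with ω h₁ h₂ h₃
  rw [psiInc, h₁, h₂, ← Finset.sum_sub_distrib]
  simp only [map_sum, map_smul, map_sub, Finset.sum_apply, Pi.smul_apply, Pi.sub_apply, smul_eq_mul]
  refine Finset.sum_congr rfl fun i hi => ?_
  have hi := Finset.mem_range.1 hi
  rw [← h₃ (i + 1) (Finset.mem_range.2 (by lia)), ← h₃ i (Finset.mem_range.2 (by lia))]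
  have hclamp := apply_min_sub_apply_min hαβ fun x => phiScale N P v x ω
  linear_combination sigv (i + 1) * (hclamp (lamv (i + 1)) - hclamp (lamv i))

theorem integral_psiInc_sq (h : HasGreenCovariance (VN N) G P) (hN : 1 ≤ N) (hv : v ∈ VN N)
    (hmono : MonotoneOn lamv (Set.Iic M)) (hlam₀ : lamv 0 = 0) (hlamM : lamv M = 1)
    (hα : 0 ≤ α) (hαβ : α ≤ β) (hβ : β ≤ 1) :
    ∫ ω, psiInc N M sigv lamv P v α β ω ^ 2 ∂P = ∑ i ∈ Finset.range M, sigv (i + 1) ^ 2 *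
      (residualVariance N v (Set.projIcc α β hαβ (lamv i)) -
        residualVariance N v (Set.projIcc α β hαβ (lamv (i + 1)))) := by
  have hsq := (psiInc_ae_eq (sigv := sigv) h hN hv hmono hlam₀ hlamM hα hαβ hβ).fun_comp (· ^ 2)
  have hclamp : ∀ x, α ≤ Set.projIcc α β hαβ x ∧ Set.projIcc α β hαβ x ≤ β :=
    fun x => (Set.projIcc α β hαβ x).2
  refine (integral_congr_ae hsq).trans ((h.integral_linComb_sq _).trans ?_)
  rw [bilin_sum_smul_increments (greenForm (VN N) G) (greenForm_comm h.isGreenFn)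
    (fun i => sigv (i + 1)) _ (fun i => harmonicWeight N v (Set.projIcc α β hαβ (lamv i))) M
    fun i j hij hj => greenForm_harmonicWeight h.isGreenFn hN hv (hα.trans (hclamp _).1)
      (Set.monotone_projIcc hαβ (hmono (hij.trans hj) hj hij)) ((hclamp _).2.trans hβ)]
  exact Finset.sum_congr rfl fun i _ => by ring

end ScaleField

section SpeedFunction

variable {M : ℕ} {sigv lamv : ℕ → ℝ} {α β : ℝ}

theorem stepFn_eq (hmono : MonotoneOn lamv (Set.Iic M)) (hlam₀ : lamv 0 = 0) {k : ℕ} (hk : k < M)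
    {r : ℝ} (hr : r ∈ Set.Ioc (lamv k) (lamv (k + 1))) : stepFn M sigv lamv r = sigv (k + 1) := by
  have hr_pos : 0 < r := (hlam₀ ▸ hmono (Nat.zero_le M) hk.le (Nat.zero_le k)).trans_lt hr.1
  rw [stepFn, if_neg hr_pos.ne', zero_add, Finset.sum_eq_single_of_mem (k + 1)
    (Finset.mem_Icc.2 ⟨by lia, hk⟩)]
  · exact if_pos hr
  · rintro i hi hik
    have hiM := (Finset.mem_Icc.1 hi).2
    refine if_neg fun hri => ?_
    rcases hik.lt_or_gt with hlt | hgt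
    · exact ((hri.2.trans (hmono hiM hk.le (by lia))).trans_lt hr.1).false
    · exact (hri.1.trans_le (hr.2.trans
        (hmono hk (Set.mem_Iic.2 (by lia)) (Nat.le_sub_one_of_lt hgt)))).false

theorem stepFn_eq_on_projIcc (hmono : MonotoneOn lamv (Set.Iic M)) (hlam₀ : lamv 0 = 0)
    (hαβ : α ≤ β) {k : ℕ} (hk : k < M) :
    ∀ r ∈ Set.uIoc (Set.projIcc α β hαβ (lamv k) : ℝ) (Set.projIcc α β hαβ (lamv (k + 1))),
      sigv (k + 1) ^ 2 = stepFn M sigv lamv r ^ 2 := fun r hr => by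
  have hle : (Set.projIcc α β hαβ (lamv k) : ℝ) ≤ Set.projIcc α β hαβ (lamv (k + 1)) :=
    Set.monotone_projIcc hαβ (hmono hk.le hk k.le_succ)
  rw [Set.uIoc_of_le hle, Set.coe_projIcc, Set.coe_projIcc] at hr
  have hα := max_lt_iff.1 hr.1
  have hβ := le_min_iff.1 ((le_max_iff.1 hr.2).resolve_left hα.1.not_ge)
  rw [stepFn_eq hmono hlam₀ hk ⟨(min_lt_iff.1 hα.2).resolve_left hβ.1.not_gt, hβ.2⟩]

theorem Jint2_stepFn_sq (hmono : MonotoneOn lamv (Set.Iic M)) (hlam₀ : lamv 0 = 0)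
    (hlamM : lamv M = 1) (hα : 0 ≤ α) (hαβ : α ≤ β) (hβ : β ≤ 1) :
    Jint2 (fun r => stepFn M sigv lamv r ^ 2) α β = ∑ i ∈ Finset.range M, sigv (i + 1) ^ 2 *
      (Set.projIcc α β hαβ (lamv (i + 1)) - Set.projIcc α β hαβ (lamv i)) := by
  have hconst := fun k hk => stepFn_eq_on_projIcc (sigv := sigv) hmono hlam₀ hαβ (k := k) hk
  have hadj := intervalIntegral.sum_integral_adjacent_intervals (μ := MeasureTheory.volume)
    (f := fun r => stepFn M sigv lamv r ^ 2) (a := fun i => (Set.projIcc α β hαβ (lamv i) : ℝ))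
    fun k hk => (intervalIntegrable_const (c := sigv (k + 1) ^ 2)).congr (hconst k hk)
  rw [hlam₀, hlamM, Set.projIcc_of_le_left hαβ hα, Set.projIcc_of_right_le hαβ hβ] at hadj
  rw [Jint2, ← hadj]
  refine Finset.sum_congr rfl fun k hk => ?_
  rw [← intervalIntegral.integral_congr_uIoo fun r hr =>
      hconst k (Finset.mem_range.1 hk) r (Set.Ioo_subset_Ioc_self hr),
    intervalIntegral.integral_const, smul_eq_mul, mul_comm]

end SpeedFunction

end GaussianFreeField

end

open GaussianFreeField in
theorem variance_uniform_upper_bound_general {N M : ℕ} (sigv : ℕ → ℝ) {lamv : ℕ → ℝ}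
    (hmono : MonotoneOn lamv (Set.Iic M)) (hlam₀ : lamv 0 = 0) (hlamM : lamv M = 1)
    {P : MeasureTheory.Measure FieldSp} (hP : IsGFF N P) (hN : 1 ≤ N) {α α' : ℝ} (hα : 0 ≤ α)
    (hαα' : α ≤ α') (hα' : α' ≤ 1) {v : Vtx} (hv : v ∈ VN N) :
    ∫ ω, psiInc N M sigv lamv P v α α' ω ^ 2 ∂P
      ≤ Jint2 (fun r => stepFn M sigv lamv r ^ 2) α α' * Real.log N
        + (6 * Real.pi + 2) * ∑ i ∈ Finset.Icc 1 M, sigv i ^ 2 := by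
  obtain ⟨G, hG⟩ := exists_hasGreenCovariance hP
  rw [integral_psiInc_sq hG hN hv hmono hlam₀ hlamM hα hαα' hα',
    Jint2_stepFn_sq hmono hlam₀ hlamM hα hαα' hα', sum_Icc_one_eq_sum_range, Finset.sum_mul,
    Finset.mul_sum, ← Finset.sum_add_distrib]
  refine Finset.sum_le_sum fun i hi => ?_
  have hi := Finset.mem_range.1 hi
  have hscale := residualVariance_sub_le hN hv
    (Set.monotone_projIcc hαα' (hmono hi.le hi i.le_succ))
    ((Set.projIcc α α' hαα' (lamv (i + 1))).2.2.trans hα')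
  refine (mul_le_mul_of_nonneg_left hscale (sq_nonneg (sigv (i + 1)))).trans_eq ?_
  ring

/-- **Lemma (Uniform variance upper bound).**
There is a constant `C₀ = C₀(σ) > 0` such that for all scales `0 ≤ α < α' ≤ 1` and all
`N` large enough (independent of `α` and `α'`),
`max_{v∈V_N} E[ψ_v(α,α')²] ≤ 𝒥_{σ²}(α,α') log N + C₀`. -/
theorem variance_uniform_upper_bound
    (M : ℕ) (sigv lamv : ℕ → ℝ) (hparams : ScaleParams M sigv lamv)
    (P : ℕ → MeasureTheory.Measure FieldSp) (hGFF : ∀ N, IsGFF N (P N)) :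
    ∃ C₀ : ℝ, 0 < C₀ ∧ ∃ N₀ : ℕ, ∀ N ≥ N₀, ∀ α α' : ℝ, 0 ≤ α → α < α' → α' ≤ 1 →
      ∀ v ∈ VN N,
        (∫ ω, (psiInc N M sigv lamv (P N) v α α' ω) ^ 2 ∂(P N))
          ≤ Jint2 (fun r => (stepFn M sigv lamv r) ^ 2) α α' * Real.log N + C₀ := by
  obtain ⟨hM, hsig, hlam₀, hlamM, hlam⟩ := hparams
  have hmono : MonotoneOn lamv (Set.Iic M) :=
    (strictMonoOn_Iic_of_lt_succ hlam).monotoneOn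
  have hpos : 0 < ∑ i ∈ Finset.Icc 1 M, sigv i ^ 2 :=
    Finset.sum_pos (fun i hi => pow_pos (hsig i hi) 2) ⟨1, Finset.mem_Icc.2 ⟨le_rfl, hM⟩⟩
  exact ⟨(6 * Real.pi + 2) * ∑ i ∈ Finset.Icc 1 M, sigv i ^ 2, by positivity, 1,
    fun N hN α α' hα hαα' hα' v hv => variance_uniform_upper_bound_general sigv
      hmono hlam₀ hlamM (hGFF N) hN hα hαα'.le hα' hv⟩
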